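/- arXiv:1607.05246 — 2 statements merged into one kernel-verified Lean document; each statement's English description precedes it below -/
import Mathlib

section
/- For every integer n ≥ 2, the best approximation in L¹(𝕋) of the kernel K_1(θ) = B_1(θ)cos θ by trigonometric polynomials of degree ≤ n−1 equals tan(π/(2n)), and the best approximation of K_2(θ) = B_1(θ)sin θ equals sec(π/(2n)) − 1. -/
noncomputable def Bern (m : ℕ) (θ : ℝ) : ℂ :=
  if m = 1 then
    ((Real.pi - θ + 2 * Real.pi * (⌊θ / (2 * Real.pi)⌋ : ℤ) : ℝ) : ℂ)
  else
    ∑' k : ℤ, if k = 0 then 0 else Complex.exp (k * θ * Complex.I) / (Complex.I * k) ^ m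

/-- Trigonometric polynomials of degree at most `n` (complex coefficients). -/
def trigPoly (n : ℕ) : Set (ℝ → ℂ) :=
  {t | ∃ c : ℤ → ℂ, t = fun θ : ℝ =>
    ∑ k ∈ Finset.Icc (-(n:ℤ)) (n:ℤ), c k * Complex.exp (k * (θ:ℂ) * Complex.I)}

noncomputable def L1norm (f : ℝ → ℂ) : ℝ :=
  (1 / (2 * Real.pi)) * ∫ φ in (0:ℝ)..(2 * Real.pi), ‖f φ‖

/-- Best approximation in `L¹(𝕋)` by trigonometric polynomials of degree at most `n`. -/
noncomputable def bestApprox (n : ℕ) (f : ℝ → ℂ) : ℝ :=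
  sInf ((fun t : ℝ → ℂ => L1norm (fun θ => f θ - t θ)) '' (trigPoly n))

/-! ### Trigonometric polynomials -/

lemma trigPoly_add {m : ℕ} {f g : ℝ → ℂ} (hf : f ∈ trigPoly m) (hg : g ∈ trigPoly m) :
    (fun θ => f θ + g θ) ∈ trigPoly m := by
  obtain ⟨c, rfl⟩ := hf
  obtain ⟨d, rfl⟩ := hg
  refine ⟨fun k => c k + d k, ?_⟩
  funext θ
  rw [← Finset.sum_add_distrib]
  exact Finset.sum_congr rfl fun k _ => by ring

lemma trigPoly_smul {m : ℕ} {f : ℝ → ℂ} (a : ℂ) (hf : f ∈ trigPoly m) :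
    (fun θ => a * f θ) ∈ trigPoly m := by
  obtain ⟨c, rfl⟩ := hf
  refine ⟨fun k => a * c k, ?_⟩
  funext θ
  rw [Finset.mul_sum]
  exact Finset.sum_congr rfl fun k _ => by ring

lemma trigPoly_zero {m : ℕ} : (fun _ => (0:ℂ)) ∈ trigPoly m := ⟨fun _ => 0, by simp⟩

lemma trigPoly_sum {m : ℕ} {ι : Type} (s : Finset ι) (f : ι → ℝ → ℂ)
    (hf : ∀ i ∈ s, f i ∈ trigPoly m) : (fun θ => ∑ i ∈ s, f i θ) ∈ trigPoly m := by
  classical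
  induction s using Finset.induction_on with
  | empty => simpa using trigPoly_zero
  | insert a s ha ih =>
    simp only [Finset.sum_insert ha]
    exact trigPoly_add (hf _ (by simp)) (ih fun i hi => hf i (by simp [hi]))

lemma trigPoly_exp {m : ℕ} (k : ℤ) (h1 : -(m:ℤ) ≤ k) (h2 : k ≤ m) :
    (fun θ : ℝ => Complex.exp (k * (θ:ℂ) * Complex.I)) ∈ trigPoly m := by
  refine ⟨fun j => if j = k then 1 else 0, ?_⟩
  funext θ
  simp [h1, h2]

lemma trigPoly_cos {m : ℕ} (k : ℕ) (h : k ≤ m) :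
    (fun θ : ℝ => ((Real.cos (k * θ) : ℝ) : ℂ)) ∈ trigPoly m := by
  have := trigPoly_add
    (trigPoly_smul (1/2) (trigPoly_exp (m := m) (k:ℤ) (by omega) (by omega)))
    (trigPoly_smul (1/2) (trigPoly_exp (m := m) (-(k:ℤ)) (by omega) (by omega)))
  convert this using 2 with θ
  push_cast
  rw [Complex.cos]
  ring_nf

lemma trigPoly_sin {m : ℕ} (k : ℕ) (h : k ≤ m) :
    (fun θ : ℝ => ((Real.sin (k * θ) : ℝ) : ℂ)) ∈ trigPoly m := by
  have := trigPoly_add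
    (trigPoly_smul (-Complex.I/2) (trigPoly_exp (m := m) (k:ℤ) (by omega) (by omega)))
    (trigPoly_smul (Complex.I/2) (trigPoly_exp (m := m) (-(k:ℤ)) (by omega) (by omega)))
  convert this using 2 with θ
  push_cast
  rw [Complex.sin]
  ring_nf

lemma trigPoly_continuous {m : ℕ} {f : ℝ → ℂ} (hf : f ∈ trigPoly m) : Continuous f := by
  obtain ⟨c, rfl⟩ := hf
  fun_prop

/-! ### The sign function -/

/-- The sign of a real number. -/
noncomputable def sg (x : ℝ) : ℝ := x / |x|

lemma sg_neg (x : ℝ) : sg (-x) = - sg x := by simp [sg, neg_div]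
lemma sg_pos {x : ℝ} (h : 0 < x) : sg x = 1 := by
  rw [sg, abs_of_pos h, div_self h.ne']
lemma sg_mul (x : ℝ) : x * sg x = |x| := by
  rcases eq_or_ne x 0 with rfl | h
  · simp
  · rw [sg]; field_simp; exact (sq_abs x).symm
lemma sg_abs (x : ℝ) : |sg x| ≤ 1 := by
  rw [sg, abs_div, abs_abs]; exact div_self_le_one _
lemma sg_meas : Measurable sg := by
  unfold sg; fun_prop

/-! ### Orthogonality and duality -/

lemma ii_mul {S : ℝ → ℝ} (hm : Measurable S) (hb : ∀ x, |S x| ≤ 1) {g : ℝ → ℂ}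
    (hg : Continuous g) (a b : ℝ) :
    IntervalIntegrable (fun x => g x * (S x : ℂ)) MeasureTheory.volume a b := by
  have h := hg.intervalIntegrable (μ := MeasureTheory.volume) a b
  rw [intervalIntegrable_iff] at h ⊢
  refine MeasureTheory.Integrable.mul_bdd (c := 1) h ?_ ?_
  · exact (Complex.measurable_ofReal.comp hm).aestronglyMeasurable
  · exact Filter.Eventually.of_forall fun x => by simpa using hb x

/-- shift of a full-period integral -/
lemma exp_sign_int_zero (n : ℕ) (hn : 1 ≤ n) {S : ℝ → ℝ}
    (ha : Function.Antiperiodic S (Real.pi / n)) (k : ℤ) (h1 : -(n:ℤ) < k) (h2 : k < n) :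
    ∫ x in (0:ℝ)..(2 * Real.pi), Complex.exp (k * (x:ℂ) * Complex.I) * (S x : ℂ) = 0 := by
  have hn0 : (n:ℝ) ≠ 0 := by positivity
  set u := Real.pi / n with hu
  have hper : Function.Periodic S (2 * Real.pi) := by
    have h := (ha.periodic_two_mul).nat_mul n
    have e : (n:ℝ) * (2 * u) = 2 * Real.pi := by rw [hu]; field_simp
    simpa [nsmul_eq_mul, e] using h
  set h : ℝ → ℂ := fun x => Complex.exp (k * (x:ℂ) * Complex.I) * (S x : ℂ) with hh
  have hhper : Function.Periodic h (2 * Real.pi) := by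
    intro x
    simp only [hh, hper x]
    congr 1
    rw [Complex.exp_eq_exp_iff_exists_int]
    exact ⟨k, by push_cast; ring⟩
  have hshift : ∀ x, h (x + u) = -Complex.exp (k * (u:ℂ) * Complex.I) * h x := by
    intro x
    simp only [hh, ha x]
    push_cast
    rw [show (k:ℂ) * (x + u) * Complex.I = k * (u:ℂ) * Complex.I + k * x * Complex.I by ring,
      Complex.exp_add]
    ring
  have e1 : ∫ x in (0:ℝ)..(2 * Real.pi), h (x + u) = ∫ x in (0:ℝ)..(2 * Real.pi), h x := by
    rw [intervalIntegral.integral_comp_add_right]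
    have := hhper.intervalIntegral_add_eq (0 + u) 0
    rw [show 0 + u + 2 * Real.pi = 2 * Real.pi + u by ring] at this
    simpa using this
  simp only [hshift] at e1
  rw [intervalIntegral.integral_const_mul] at e1
  have e2 : (1 + Complex.exp (k * (u:ℂ) * Complex.I)) * ∫ x in (0:ℝ)..(2 * Real.pi), h x = 0 := by
    linear_combination -e1
  rcases mul_eq_zero.1 e2 with e3 | e3
  · exfalso
    have e4 : Complex.exp (k * (u:ℂ) * Complex.I) = Complex.exp (Real.pi * Complex.I) := by
      rw [Complex.exp_pi_mul_I]; linear_combination e3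
    rw [Complex.exp_eq_exp_iff_exists_int] at e4
    obtain ⟨j, hj⟩ := e4
    have hj2 := congrArg Complex.im hj
    simp [hu] at hj2
    have hj3 : (k:ℝ) = n + j * (2 * n) := by
      have hp := Real.pi_ne_zero
      field_simp at hj2
      linarith
    have hj4 : k = n + j * (2 * n) := by exact_mod_cast hj3
    have : 0 < (n:ℤ) * (2 * j + 2) := by linarith
    have t1 : 0 < 2 * j + 2 := by
      by_contra hc; push Not at hc; nlinarith
    have : (n:ℤ) * (2 * j) < 0 := by linarith
    have t2 : 2 * j < 0 := by
      by_contra hc; push Not at hc; nlinarith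
    omega
  · exact e3

lemma trig_sign_int_zero (n : ℕ) (hn : 1 ≤ n) {S : ℝ → ℝ} (hm : Measurable S)
    (hb : ∀ x, |S x| ≤ 1)
    (ha : Function.Antiperiodic S (Real.pi / n)) {t : ℝ → ℂ} (ht : t ∈ trigPoly (n - 1)) :
    ∫ x in (0:ℝ)..(2 * Real.pi), t x * (S x : ℂ) = 0 := by
  obtain ⟨c, rfl⟩ := ht
  simp only [Finset.sum_mul]
  rw [intervalIntegral.integral_finsetSum]
  · refine Finset.sum_eq_zero fun k hk => ?_
    simp only [mul_assoc (c k)]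
    rw [intervalIntegral.integral_const_mul, exp_sign_int_zero n hn ha k, mul_zero] <;>
    · rw [Finset.mem_Icc] at hk; omega
  · intro k _
    exact ii_mul hm hb (by fun_prop) _ _

lemma bestApprox_eq (n : ℕ) (hn : 1 ≤ n) {S : ℝ → ℝ} (hm : Measurable S)
    (hb : ∀ x, |S x| ≤ 1)
    (ha : Function.Antiperiodic S (Real.pi / n)) {K : ℝ → ℂ} (hK : Continuous K)
    {f : ℝ → ℂ} (hf : ∀ x ∈ Set.Ioo 0 (2 * Real.pi), f x = K x) (v : ℝ)
    (hv : ∫ x in (0:ℝ)..(2 * Real.pi), K x * (S x : ℂ) = ((2 * Real.pi * v : ℝ) : ℂ))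
    {t : ℝ → ℂ} (ht : t ∈ trigPoly (n - 1))
    (hsg : ∀ x ∈ Set.Ioo 0 (2 * Real.pi), (K x - t x) * (S x : ℂ) = ((‖K x - t x‖ : ℝ) : ℂ)) :
    bestApprox (n - 1) f = v := by
  have hpi := Real.pi_pos
  have key : ∀ t' ∈ trigPoly (n - 1),
      ∫ x in (0:ℝ)..(2 * Real.pi), (K x - t' x) * (S x : ℂ) = ((2 * Real.pi * v : ℝ) : ℂ) := by
    intro t' ht'
    simp only [sub_mul]
    rw [intervalIntegral.integral_sub (ii_mul hm hb hK _ _)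
      (ii_mul hm hb (trigPoly_continuous ht') _ _), trig_sign_int_zero n hn hm hb ha ht', hv,
      sub_zero]
  have congr1 : ∀ t' : ℝ → ℂ, ∫ x in (0:ℝ)..(2 * Real.pi), ‖f x - t' x‖
      = ∫ x in (0:ℝ)..(2 * Real.pi), ‖K x - t' x‖ := by
    intro t'
    rw [intervalIntegral.integral_of_le (by positivity),
      intervalIntegral.integral_of_le (by positivity),
      MeasureTheory.integral_Ioc_eq_integral_Ioo, MeasureTheory.integral_Ioc_eq_integral_Ioo]
    refine MeasureTheory.setIntegral_congr_fun measurableSet_Ioo fun x hx => ?_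
    simp only [hf x hx]
  apply IsLeast.csInf_eq
  constructor
  · refine ⟨t, ht, ?_⟩
    simp only [L1norm]
    rw [congr1]
    have h := key t ht
    have e : ∫ x in (0:ℝ)..(2 * Real.pi), (K x - t x) * (S x : ℂ)
        = ∫ x in (0:ℝ)..(2 * Real.pi), ((‖K x - t x‖ : ℝ) : ℂ) := by
      rw [intervalIntegral.integral_of_le (by positivity),
        intervalIntegral.integral_of_le (by positivity),
        MeasureTheory.integral_Ioc_eq_integral_Ioo, MeasureTheory.integral_Ioc_eq_integral_Ioo]
      exact MeasureTheory.setIntegral_congr_fun measurableSet_Ioo fun x hx => hsg x hx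
    rw [e, intervalIntegral.integral_ofReal] at h
    have h' := Complex.ofReal_injective h
    rw [h']
    field_simp
  · rintro _ ⟨t', ht', rfl⟩
    simp only [L1norm]
    rw [congr1]
    have h := key t' ht'
    have h2 : |2 * Real.pi * v| ≤ ∫ x in (0:ℝ)..(2 * Real.pi), ‖K x - t' x‖ := by
      rw [← Real.norm_eq_abs, ← Complex.norm_real, ← h]
      refine (intervalIntegral.norm_integral_le_integral_norm (by positivity)).trans ?_
      refine intervalIntegral.integral_mono_on (by positivity)
        (ii_mul hm hb (hK.sub (trigPoly_continuous ht')) _ _).norm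
        ((hK.sub (trigPoly_continuous ht')).norm.intervalIntegrable _ _) fun x _ => ?_
      rw [norm_mul]
      exact mul_le_of_le_one_right (norm_nonneg _) (by simpa using hb x)
    have h3 := (le_abs_self _).trans h2
    rw [one_div, le_inv_mul_iff₀ (by positivity)]
    exact h3

/-- The first moment of `e^{ix} S(x)`. -/
lemma moment (n : ℕ) (hn : 2 ≤ n) {S : ℝ → ℝ} (hm : Measurable S)
    (hb : ∀ x, |S x| ≤ 1) (ha : Function.Antiperiodic S (Real.pi / n)) :
    (1 + Complex.exp ((Real.pi / n : ℝ) * Complex.I)) *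
      ∫ x in (0:ℝ)..(2 * Real.pi), ((Real.pi - x : ℝ) * Complex.exp (x * Complex.I)) * (S x : ℂ)
    = - (2 * Real.pi * Complex.exp ((Real.pi / n : ℝ) * Complex.I) *
      ∫ x in (-(Real.pi / n))..(0:ℝ), Complex.exp (x * Complex.I) * (S x : ℂ)) := by
  have hn0 : (n:ℝ) ≠ 0 := by positivity
  have hz := exp_sign_int_zero n (by omega) ha 1 (by omega) (by omega)
  set u := Real.pi / n with hu
  have hper : Function.Periodic S (2 * Real.pi) := by
    have h := (ha.periodic_two_mul).nat_mul n
    have e : (n:ℝ) * (2 * u) = 2 * Real.pi := by rw [hu]; field_simp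
    simpa [nsmul_eq_mul, e] using h
  set h : ℝ → ℂ := fun x => Complex.exp ((x:ℂ) * Complex.I) * (S x : ℂ) with hh
  have hz' : ∫ x in (0:ℝ)..(2 * Real.pi), h x = 0 := by simpa [hh] using hz
  have hhper : Function.Periodic h (2 * Real.pi) := by
    intro x
    simp only [hh, hper x]
    congr 1
    rw [Complex.exp_eq_exp_iff_exists_int]
    exact ⟨1, by push_cast; ring⟩
  have hshift : ∀ x, h (x + u) = -Complex.exp ((u:ℂ) * Complex.I) * h x := by
    intro x
    simp only [hh, ha x]
    push_cast
    rw [show ((x:ℂ) + u) * Complex.I = (u:ℂ) * Complex.I + x * Complex.I by ring,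
      Complex.exp_add]
    ring
  have ih : ∀ a b, IntervalIntegrable h MeasureTheory.volume a b := fun a b =>
    ii_mul hm hb (by fun_prop) a b
  have ixh : ∀ a b, IntervalIntegrable (fun x : ℝ => (x:ℂ) * h x) MeasureTheory.volume a b := by
    intro a b
    have := ii_mul hm hb (g := fun x : ℝ => (x:ℂ) * Complex.exp ((x:ℂ) * Complex.I))
      (by fun_prop) a b
    simpa only [hh, mul_assoc] using this
  set M := ∫ x in (0:ℝ)..(2 * Real.pi), (x:ℂ) * h x with hM
  have eJ : ∫ x in (0:ℝ)..(2 * Real.pi),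
      ((Real.pi - x : ℝ) * Complex.exp (x * Complex.I)) * (S x : ℂ) = -M := by
    have : ∀ x : ℝ, ((Real.pi - x : ℝ) * Complex.exp (x * Complex.I)) * (S x : ℂ)
        = (Real.pi:ℂ) * h x - (x:ℂ) * h x := by
      intro x; simp only [hh]; push_cast; ring
    simp only [this]
    rw [intervalIntegral.integral_sub ((ih _ _).const_mul _) (ixh _ _),
      intervalIntegral.integral_const_mul, hz', ← hM]
    ring
  rw [eJ]
  -- the shift
  have e1 : ∫ x in (-u)..(2 * Real.pi - u), ((x + u : ℝ) : ℂ) * h (x + u) = M := by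
    rw [intervalIntegral.integral_comp_add_right (fun x : ℝ => (x:ℂ) * h x)]
    simp [hM]
  have e2 : ∫ x in (-u)..(2 * Real.pi - u), h x = 0 := by
    have := hhper.intervalIntegral_add_eq (-u) 0
    rw [show -u + 2 * Real.pi = 2 * Real.pi - u by ring, zero_add, hz'] at this
    exact this
  have e3 : M = -Complex.exp ((u:ℂ) * Complex.I) *
      ∫ x in (-u)..(2 * Real.pi - u), (x:ℂ) * h x := by
    rw [← e1]
    have : ∀ x : ℝ, ((x + u : ℝ) : ℂ) * h (x + u) = -Complex.exp ((u:ℂ) * Complex.I) *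
        ((x:ℂ) * h x) + (-Complex.exp ((u:ℂ) * Complex.I) * u) * h x := by
      intro x; rw [hshift]; push_cast; ring
    simp only [this]
    rw [intervalIntegral.integral_add ((ixh _ _).const_mul _) ((ih _ _).const_mul _),
      intervalIntegral.integral_const_mul, intervalIntegral.integral_const_mul, e2]
    ring
  have e4 : ∫ x in (2 * Real.pi - u)..(2 * Real.pi), (x:ℂ) * h x
      = (∫ x in (-u)..0, (x:ℂ) * h x) + 2 * Real.pi * ∫ x in (-u)..0, h x := by
    have := intervalIntegral.integral_comp_add_right (a := -u) (b := 0)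
      (fun x : ℝ => (x:ℂ) * h x) (2 * Real.pi)
    rw [show -u + 2 * Real.pi = 2 * Real.pi - u by ring, zero_add] at this
    rw [← this, ← intervalIntegral.integral_const_mul,
      ← intervalIntegral.integral_add (ixh _ _) ((ih _ _).const_mul _)]
    congr 1
    funext x
    rw [hhper x]; push_cast; ring
  have e5 : ∫ x in (-u)..(2 * Real.pi - u), (x:ℂ) * h x
      = (∫ x in (-u)..0, (x:ℂ) * h x) + M
        - ∫ x in (2 * Real.pi - u)..(2 * Real.pi), (x:ℂ) * h x := by
    have a1 := intervalIntegral.integral_add_adjacent_intervals (ixh (-u) 0) (ixh 0 (2 * Real.pi))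
    have a2 := intervalIntegral.integral_add_adjacent_intervals (ixh (-u) (2 * Real.pi - u))
      (ixh (2 * Real.pi - u) (2 * Real.pi))
    rw [← hM] at a1
    linear_combination a2 - a1
  rw [e5, e4] at e3
  linear_combination -e3

/-! ### Algebraic identities -/

/-- The Poisson denominator. -/
noncomputable def PD (r θ : ℝ) : ℝ := 1 - 2 * r * Real.cos θ + r ^ 2

/-- The geometric sum in `r²`. -/
noncomputable def qs (m : ℕ) (r : ℝ) : ℝ := ∑ j ∈ Finset.range m, r ^ (2 * j)

lemma qs_mul (m : ℕ) (r : ℝ) : (1 - r ^ 2) * qs m r = 1 - r ^ (2 * m) := by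
  have := mul_neg_geom_sum (r ^ 2) m
  simpa only [qs, pow_mul] using this

lemma qs_pos (m : ℕ) (r : ℝ) : 0 < qs (m + 1) r := by
  rw [qs, Finset.sum_range_succ']
  have : 0 ≤ ∑ j ∈ Finset.range m, r ^ (2 * (j + 1)) :=
    Finset.sum_nonneg fun j _ => by rw [pow_mul']; positivity
  simp only [mul_zero, pow_zero]
  linarith

lemma qs_cont (m : ℕ) : Continuous (qs m) := by unfold qs; fun_prop

lemma sin_rec (a θ : ℝ) :
    2 * Real.cos θ * Real.sin ((a + 1) * θ) = Real.sin ((a + 2) * θ) + Real.sin (a * θ) := by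
  rw [show (a + 2) * θ = (a + 1) * θ + θ by ring, show a * θ = (a + 1) * θ - θ by ring,
    Real.sin_add, Real.sin_sub]
  ring

lemma cos_rec (a θ : ℝ) :
    2 * Real.sin θ * Real.sin ((a + 1) * θ) = Real.cos (a * θ) - Real.cos ((a + 2) * θ) := by
  rw [show (a + 2) * θ = (a + 1) * θ + θ by ring, show a * θ = (a + 1) * θ - θ by ring,
    Real.cos_add, Real.cos_sub]
  ring

lemma sumA (r θ : ℝ) (m : ℕ) :
    PD r θ * ∑ k ∈ Finset.range m, r ^ k * Real.sin ((k + 1) * θ)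
      = Real.sin θ - r ^ m * Real.sin ((m + 1) * θ) + r ^ (m + 1) * Real.sin (m * θ) := by
  induction m with
  | zero => simp
  | succ m ih =>
    rw [Finset.sum_range_succ, mul_add, ih]
    have := sin_rec m θ
    push_cast
    rw [show (m:ℝ) + 1 + 1 = m + 2 by ring, PD]
    linear_combination (-r ^ (m + 1)) * this

lemma sumB (r θ : ℝ) (m N : ℕ) :
    PD r θ * ∑ k ∈ Finset.range m, r ^ (N + m - k) * Real.sin ((k + 1) * θ)
      = r ^ (N + m + 2) * Real.sin θ - r ^ (N + 2) * Real.sin ((m + 1) * θ)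
        + r ^ (N + 1) * Real.sin (m * θ) := by
  induction m generalizing N with
  | zero => simp
  | succ m ih =>
    rw [Finset.sum_range_succ, mul_add]
    have h := ih (N + 1)
    have e : N + 1 + m = N + (m + 1) := by ring
    rw [e] at h
    rw [h, show N + (m + 1) - m = N + 1 by omega]
    have := sin_rec m θ
    push_cast
    rw [show (m:ℝ) + 1 + 1 = m + 2 by ring, PD]
    linear_combination (-r ^ (N + 2)) * this

lemma ident1 (p : ℕ) (r θ : ℝ) (hr : 1 - r ^ 2 ≠ 0) :
    2 * Real.cos θ * Real.sin θ * qs (p + 2) r =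
      Real.sin ((p + 2) * θ) * ((1 + r ^ 2) * r ^ p) +
      PD r θ * (∑ k ∈ Finset.range p, r ^ k * qs (p + 1 - k) r *
        (Real.sin ((k + 2) * θ) + Real.sin (k * θ)) + r ^ p * Real.sin (p * θ)) := by
  have hA := sumA r θ (p + 1)
  have hB := sumB r θ (p + 1) (p + 1)
  apply mul_left_cancel₀ hr
  have e1 : (1 - r ^ 2) * ∑ k ∈ Finset.range p, r ^ k * qs (p + 1 - k) r *
        (Real.sin ((k + 2) * θ) + Real.sin (k * θ))
      = 2 * Real.cos θ * (∑ k ∈ Finset.range p, r ^ k * Real.sin ((k + 1) * θ)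
        - ∑ k ∈ Finset.range p, r ^ (p + 1 + (p + 1) - k) * Real.sin ((k + 1) * θ)) := by
    rw [← Finset.sum_sub_distrib, Finset.mul_sum, Finset.mul_sum]
    refine Finset.sum_congr rfl fun k hk => ?_
    have hk' := Finset.mem_range.1 hk
    have h1 := qs_mul (p + 1 - k) r
    have h2 : r ^ (p + 1 + (p + 1) - k) = r ^ k * r ^ (2 * (p + 1 - k)) := by
      rw [← pow_add]; congr 1; omega
    rw [h2, ← sin_rec]
    linear_combination (r ^ k * (2 * Real.cos θ * Real.sin ((k + 1) * θ))) * h1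
  rw [Finset.sum_range_succ] at hA hB
  have e2 := qs_mul (p + 2) r
  have e3 := sin_rec p θ
  rw [show p + 1 + (p + 1) - p = p + 2 by omega] at hB
  push_cast at hA hB
  rw [show (p:ℝ) + 1 + 1 = p + 2 by ring] at hA hB
  have hD : PD r θ = 1 - 2 * r * Real.cos θ + r ^ 2 := rfl
  linear_combination (2 * Real.cos θ * Real.sin θ) * e2 - PD r θ * e1 - (2 * Real.cos θ) * (hA - hB)
    + PD r θ * (r ^ p - r ^ (p + 2)) * e3 + (r ^ p - r ^ (p+2)) * Real.sin ((p + 2) * θ) * hD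

lemma ident2 (p : ℕ) (r θ : ℝ) :
    2 * Real.sin θ * Real.sin θ * (1 + r ^ (2 * p + 4)) =
      -Real.cos ((p + 2) * θ) * ((1 - r ^ 2) ^ 2 * r ^ p) +
      PD r θ * (∑ k ∈ Finset.range p, (r ^ k + r ^ (p + 1 + (p + 1) - k)) *
        (Real.cos (k * θ) - Real.cos ((k + 2) * θ)) + (r ^ p + r ^ (p + 2)) * Real.cos (p * θ)
        + 2 * r ^ (p + 1) * Real.cos ((p + 1) * θ)) := by
  have hA := sumA r θ (p + 1)
  have hB := sumB r θ (p + 1) (p + 1)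
  have e1 : ∑ k ∈ Finset.range p, (r ^ k + r ^ (p + 1 + (p + 1) - k)) *
        (Real.cos (k * θ) - Real.cos ((k + 2) * θ))
      = 2 * Real.sin θ * (∑ k ∈ Finset.range p, r ^ k * Real.sin ((k + 1) * θ)
        + ∑ k ∈ Finset.range p, r ^ (p + 1 + (p + 1) - k) * Real.sin ((k + 1) * θ)) := by
    rw [← Finset.sum_add_distrib, Finset.mul_sum]
    refine Finset.sum_congr rfl fun k hk => ?_
    rw [← cos_rec]
    ring
  rw [Finset.sum_range_succ] at hA hB
  have e3 := cos_rec p θ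
  rw [show p + 1 + (p + 1) - p = p + 2 by omega] at hB
  push_cast at hA hB
  rw [show (p:ℝ) + 1 + 1 = p + 2 by ring] at hA hB
  have hD : PD r θ = 1 - 2 * r * Real.cos θ + r ^ 2 := rfl
  have e4 : Real.sin ((p + 1) * θ) = Real.sin ((p + 2) * θ) * Real.cos θ
      - Real.cos ((p + 2) * θ) * Real.sin θ := by
    rw [← Real.sin_sub]; ring_nf
  have e5 : Real.cos ((p + 1) * θ) = Real.cos ((p + 2) * θ) * Real.cos θ
      + Real.sin ((p + 2) * θ) * Real.sin θ := by
    rw [← Real.cos_sub]; ring_nf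
  have e6 := Real.sin_sq_add_cos_sq θ
  have key : r ^ p * (2 * r * (1 + r ^ 2) * Real.sin ((p + 2) * θ) * Real.sin θ
      - 4 * r ^ 2 * Real.sin ((p + 1) * θ) * Real.sin θ + (1 - r ^ 2) ^ 2 * Real.cos ((p + 2) * θ))
      = PD r θ * r ^ p * ((1 + r ^ 2) * Real.cos ((p + 2) * θ) + 2 * r * Real.cos ((p + 1) * θ)) := by
    rw [e4, e5, hD]
    linear_combination (4 * r ^ 2 * r ^ p * Real.cos ((p + 2) * θ)) * e6
  rw [e1]
  linear_combination key - (2 * Real.sin θ) * (hA + hB) + PD r θ * (r ^ p + r ^ (p + 2)) * e3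

/-! ### The integral representation -/

lemma PD_pos {r θ : ℝ} (hr : 0 ≤ r) (h0 : 0 < θ) (h1 : θ < 2 * Real.pi) : 0 < PD r θ := by
  have hs : 0 < Real.sin (θ / 2) := Real.sin_pos_of_pos_of_lt_pi (by linarith) (by linarith)
  have hc : Real.cos θ = 1 - 2 * Real.sin (θ / 2) ^ 2 := by
    have h2 := Real.cos_two_mul (θ / 2)
    rw [show 2 * (θ / 2) = θ by ring] at h2
    have := Real.sin_sq_add_cos_sq (θ / 2)
    linarith
  rw [PD, hc]
  rcases hr.eq_or_lt with rfl | hr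
  · norm_num
  · have : 0 < r * Real.sin (θ / 2) ^ 2 := by positivity
    nlinarith [sq_nonneg (1 - r)]

lemma bern_int_lt {θ : ℝ} (h0 : 0 < θ) (h1 : θ < Real.pi) :
    ∫ r in (0:ℝ)..1, Real.sin θ / PD r θ = (Real.pi - θ) / 2 := by
  have hs : 0 < Real.sin θ := Real.sin_pos_of_pos_of_lt_pi h0 h1
  have hsc := Real.sin_sq_add_cos_sq θ
  have hD : ∀ r, PD r θ = Real.sin θ ^ 2 + (r - Real.cos θ) ^ 2 := by
    intro r; rw [PD]; linear_combination -hsc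
  have hDpos : ∀ r, 0 < PD r θ := fun r => by rw [hD]; positivity
  have hder : ∀ r ∈ Set.uIcc (0:ℝ) 1,
      HasDerivAt (fun r => Real.arctan ((r - Real.cos θ) / Real.sin θ))
        (Real.sin θ / PD r θ) r := by
    intro r _
    have h := ((((hasDerivAt_id r).sub_const (Real.cos θ)).div_const (Real.sin θ))).arctan
    refine h.congr_deriv ?_
    rw [hD]
    simp only [id]
    have : Real.sin θ ^ 2 + (r - Real.cos θ) ^ 2 ≠ 0 := by positivity
    field_simp
  have hcont : Continuous fun r => Real.sin θ / PD r θ := by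
    refine continuous_const.div (by unfold PD; fun_prop) fun r => (hDpos r).ne'
  rw [intervalIntegral.integral_eq_sub_of_hasDerivAt hder (hcont.intervalIntegrable _ _)]
  have t1 : (1 - Real.cos θ) / Real.sin θ = Real.tan (θ / 2) := by
    have hs2 : 0 < Real.sin (θ / 2) := Real.sin_pos_of_pos_of_lt_pi (by linarith) (by linarith)
    have hc2 : 0 < Real.cos (θ / 2) := Real.cos_pos_of_mem_Ioo ⟨by linarith, by linarith⟩
    have a1 : Real.sin θ = 2 * Real.sin (θ / 2) * Real.cos (θ / 2) := by
      rw [← Real.sin_two_mul]; ring_nf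
    have a2 : Real.cos θ = 1 - 2 * Real.sin (θ / 2) ^ 2 := by
      have h2 := Real.cos_two_mul (θ / 2)
      rw [show 2 * (θ / 2) = θ by ring] at h2
      have := Real.sin_sq_add_cos_sq (θ / 2)
      linarith
    rw [a1, a2, Real.tan_eq_sin_div_cos]
    field_simp
    ring
  have t2 : (0 - Real.cos θ) / Real.sin θ = Real.tan (θ - Real.pi / 2) := by
    rw [Real.tan_eq_sin_div_cos, Real.sin_sub_pi_div_two, Real.cos_sub_pi_div_two, zero_sub]
  rw [t1, t2, Real.arctan_tan (by linarith) (by linarith),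
    Real.arctan_tan (by linarith) (by linarith)]
  ring

lemma bern_int {θ : ℝ} (h0 : 0 < θ) (h1 : θ < 2 * Real.pi) :
    ∫ r in (0:ℝ)..1, Real.sin θ / PD r θ = (Real.pi - θ) / 2 := by
  rcases lt_trichotomy θ Real.pi with h | h | h
  · exact bern_int_lt h0 h
  · subst h; simp
  · have := bern_int_lt (θ := 2 * Real.pi - θ) (by linarith) (by linarith)
    simp only [PD, Real.sin_two_pi_sub, Real.cos_two_pi_sub, neg_div,
      intervalIntegral.integral_neg] at this
    simp only [PD]
    linarith

/-- Families of trigonometric polynomials that may be integrated in the parameter. -/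
def Good (m : ℕ) (T : ℝ → ℝ → ℝ) : Prop :=
  (∀ θ, Continuous fun r => T r θ) ∧
    (fun θ : ℝ => ((∫ r in (0:ℝ)..1, T r θ : ℝ) : ℂ)) ∈ trigPoly m

lemma Good.add {m : ℕ} {T U : ℝ → ℝ → ℝ} (hT : Good m T) (hU : Good m U) :
    Good m (fun r θ => T r θ + U r θ) := by
  refine ⟨fun θ => (hT.1 θ).add (hU.1 θ), ?_⟩
  convert trigPoly_add hT.2 hU.2 using 2 with θ
  rw [intervalIntegral.integral_add ((hT.1 θ).intervalIntegrable _ _)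
    ((hU.1 θ).intervalIntegrable _ _)]
  push_cast; rfl

lemma Good.sum {m : ℕ} (s : Finset ℕ) {T : ℕ → ℝ → ℝ → ℝ} (hT : ∀ k ∈ s, Good m (T k)) :
    Good m (fun r θ => ∑ k ∈ s, T k r θ) := by
  refine ⟨fun θ => continuous_finsetSum s fun k hk => (hT k hk).1 θ, ?_⟩
  convert trigPoly_sum s (fun k θ => ((∫ r in (0:ℝ)..1, T k r θ : ℝ) : ℂ))
    (fun k hk => (hT k hk).2) using 2 with θ
  rw [intervalIntegral.integral_finsetSum fun k hk => ((hT k hk).1 θ).intervalIntegrable _ _]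
  push_cast; rfl

lemma Good.mk' {m : ℕ} {a τ : ℝ → ℝ} (ha : Continuous a)
    (hτ : (fun θ : ℝ => (τ θ : ℂ)) ∈ trigPoly m) : Good m (fun r θ => a r * τ θ) := by
  refine ⟨fun θ => ha.mul continuous_const, ?_⟩
  convert trigPoly_smul ((∫ r in (0:ℝ)..1, a r : ℝ) : ℂ) hτ using 2 with θ
  rw [intervalIntegral.integral_mul_const]
  push_cast; rfl

lemma exists_approx {m : ℕ} {g h W : ℝ → ℝ} {T : ℝ → ℝ → ℝ} (hW : Continuous W)
    (hW0 : ∀ r ∈ Set.Icc (0:ℝ) 1, 0 ≤ W r) (hT : Good m T)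
    (hid : ∀ θ ∈ Set.Ioo 0 (2 * Real.pi), ∀ r ∈ Set.Ioo (0:ℝ) 1,
      2 * g θ * Real.sin θ = h θ * W r + PD r θ * T r θ) :
    ∃ t : ℝ → ℝ, (fun θ => (t θ : ℂ)) ∈ trigPoly m ∧
      ∀ θ ∈ Set.Ioo 0 (2 * Real.pi), ∃ G, 0 ≤ G ∧ (Real.pi - θ) * g θ - t θ = h θ * G := by
  refine ⟨_, hT.2, fun θ hθ => ⟨∫ r in (0:ℝ)..1, W r / PD r θ, ?_, ?_⟩⟩
  · exact intervalIntegral.integral_nonneg zero_le_one fun r hr =>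
      div_nonneg (hW0 r hr) (PD_pos hr.1 hθ.1 hθ.2).le
  · have hb := bern_int hθ.1 hθ.2
    have e : ∫ r in (0:ℝ)..1, 2 * g θ * (Real.sin θ / PD r θ)
        = ∫ r in (0:ℝ)..1, (h θ * (W r / PD r θ) + T r θ) := by
      rw [intervalIntegral.integral_of_le zero_le_one, intervalIntegral.integral_of_le zero_le_one,
        MeasureTheory.integral_Ioc_eq_integral_Ioo, MeasureTheory.integral_Ioc_eq_integral_Ioo]
      refine MeasureTheory.setIntegral_congr_fun measurableSet_Ioo fun r hr => ?_
      have hp := PD_pos hr.1.le hθ.1 hθ.2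
      have := hid θ hθ r hr
      field_simp
      linarith
    have hc : ContinuousOn (fun r => W r / PD r θ) (Set.uIcc 0 1) := by
      refine hW.continuousOn.div (by unfold PD; fun_prop) fun r hr => ?_
      rw [Set.uIcc_of_le zero_le_one] at hr
      exact (PD_pos hr.1 hθ.1 hθ.2).ne'
    rw [intervalIntegral.integral_add (hc.intervalIntegrable.const_mul _)
      ((hT.1 θ).intervalIntegrable _ _), intervalIntegral.integral_const_mul,
      intervalIntegral.integral_const_mul, hb] at e
    linarith

lemma approx1 (p : ℕ) : ∃ t : ℝ → ℝ, (fun θ => (t θ : ℂ)) ∈ trigPoly (p + 1) ∧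
      ∀ θ ∈ Set.Ioo 0 (2 * Real.pi), ∃ G, 0 ≤ G ∧
        (Real.pi - θ) * Real.cos θ - t θ = Real.sin ((p + 2 : ℕ) * θ) * G := by
  have hq : ∀ r, 0 < qs (p + 2) r := qs_pos (p + 1)
  refine exists_approx (W := fun r => (1 + r ^ 2) * r ^ p / qs (p + 2) r)
    (T := fun r θ => ∑ k ∈ Finset.range p, (r ^ k * qs (p + 1 - k) r / qs (p + 2) r) *
        (Real.sin ((k + 2 : ℕ) * θ) + Real.sin (k * θ))
        + r ^ p / qs (p + 2) r * Real.sin (p * θ)) ?_ ?_ ?_ ?_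
  · exact Continuous.div (by fun_prop) (qs_cont _) fun r => (hq r).ne'
  · intro r hr
    have := hr.1
    have := hq r
    positivity
  · refine Good.add (Good.sum _ fun k hk => Good.mk' ?_ ?_) (Good.mk' ?_ ?_)
    · have := qs_cont (p + 1 - k)
      exact Continuous.div (by fun_prop) (qs_cont _) fun r => (hq r).ne'
    · have hk' := Finset.mem_range.1 hk
      have := trigPoly_add (trigPoly_sin (m := p + 1) (k + 2) (by omega))
        (trigPoly_sin (m := p + 1) k (by omega))
      convert this using 2
      push_cast; rfl
    · exact Continuous.div (by fun_prop) (qs_cont _) fun r => (hq r).ne'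
    · exact trigPoly_sin p (by omega)
  · intro θ _ r hr
    have h := ident1 p r θ (by nlinarith [hr.1, hr.2])
    have hq' := (hq r).ne'
    have e : ∑ k ∈ Finset.range p, (r ^ k * qs (p + 1 - k) r / qs (p + 2) r) *
        (Real.sin ((k + 2 : ℕ) * θ) + Real.sin (k * θ))
        = (∑ k ∈ Finset.range p, r ^ k * qs (p + 1 - k) r *
        (Real.sin ((k + 2) * θ) + Real.sin (k * θ))) / qs (p + 2) r := by
      rw [Finset.sum_div]
      refine Finset.sum_congr rfl fun k _ => ?_
      push_cast; ring
    rw [e]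
    push_cast
    generalize (∑ k ∈ Finset.range p, r ^ k * qs (p + 1 - k) r *
        (Real.sin ((k + 2) * θ) + Real.sin (k * θ))) = X at h ⊢
    generalize Real.sin ((p + 2) * θ) = A at h ⊢
    field_simp
    linear_combination h

lemma approx2 (p : ℕ) : ∃ t : ℝ → ℝ, (fun θ => (t θ : ℂ)) ∈ trigPoly (p + 1) ∧
      ∀ θ ∈ Set.Ioo 0 (2 * Real.pi), ∃ G, 0 ≤ G ∧
        (Real.pi - θ) * Real.sin θ - t θ = -Real.cos ((p + 2 : ℕ) * θ) * G := by
  have hq : ∀ r : ℝ, 0 < 1 + r ^ (2 * p + 4) := fun r => by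
    rw [show 2 * p + 4 = 2 * (p + 2) by ring, pow_mul']; positivity
  refine exists_approx (W := fun r => (1 - r ^ 2) ^ 2 * r ^ p / (1 + r ^ (2 * p + 4)))
    (T := fun r θ => ∑ k ∈ Finset.range p,
        ((r ^ k + r ^ (p + 1 + (p + 1) - k)) / (1 + r ^ (2 * p + 4))) *
        (Real.cos (k * θ) - Real.cos ((k + 2 : ℕ) * θ))
        + (r ^ p + r ^ (p + 2)) / (1 + r ^ (2 * p + 4)) * Real.cos (p * θ)
        + 2 * r ^ (p + 1) / (1 + r ^ (2 * p + 4)) * Real.cos ((p + 1 : ℕ) * θ)) ?_ ?_ ?_ ?_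
  · exact Continuous.div (by fun_prop) (by fun_prop) fun r => (hq r).ne'
  · intro r hr
    have := hr.1
    have := hq r
    positivity
  · refine Good.add (Good.add (Good.sum _ fun k hk => Good.mk' ?_ ?_) (Good.mk' ?_ ?_))
      (Good.mk' ?_ ?_)
    · exact Continuous.div (by fun_prop) (by fun_prop) fun r => (hq r).ne'
    · have hk' := Finset.mem_range.1 hk
      have := trigPoly_add (trigPoly_cos (m := p + 1) k (by omega))
        (trigPoly_smul (-1) (trigPoly_cos (m := p + 1) (k + 2) (by omega)))
      convert this using 2
      push_cast; ring
    · exact Continuous.div (by fun_prop) (by fun_prop) fun r => (hq r).ne'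
    · exact trigPoly_cos p (by omega)
    · exact Continuous.div (by fun_prop) (by fun_prop) fun r => (hq r).ne'
    · exact trigPoly_cos (p + 1) (by omega)
  · intro θ _ r hr
    have h := ident2 p r θ
    have hq' := (hq r).ne'
    have e : ∑ k ∈ Finset.range p,
        ((r ^ k + r ^ (p + 1 + (p + 1) - k)) / (1 + r ^ (2 * p + 4))) *
        (Real.cos (k * θ) - Real.cos ((k + 2 : ℕ) * θ))
        = (∑ k ∈ Finset.range p, (r ^ k + r ^ (p + 1 + (p + 1) - k)) *
        (Real.cos (k * θ) - Real.cos ((k + 2) * θ))) / (1 + r ^ (2 * p + 4)) := by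
      rw [Finset.sum_div]
      refine Finset.sum_congr rfl fun k _ => ?_
      push_cast; ring
    rw [e]
    push_cast
    generalize (∑ k ∈ Finset.range p, (r ^ k + r ^ (p + 1 + (p + 1) - k)) *
        (Real.cos (k * θ) - Real.cos ((k + 2) * θ))) = X at h ⊢
    generalize Real.cos ((p + 2) * θ) = A at h ⊢
    generalize Real.cos ((p + 1) * θ) = B at h ⊢
    field_simp
    linear_combination h

/-! ### Evaluation of the dual functionals -/

lemma int_exp_I (a b : ℝ) : ∫ x in a..b, Complex.exp (x * Complex.I)
    = -Complex.I * (Complex.exp (b * Complex.I) - Complex.exp (a * Complex.I)) := by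
  have := integral_exp_mul_complex (a := a) (b := b) Complex.I_ne_zero
  simp only [mul_comm Complex.I] at this
  rw [this, div_eq_mul_inv, Complex.inv_I]
  ring

lemma int_const_sign {S : ℝ → ℝ} {a b : ℝ} (hab : a ≤ b) (c : ℝ)
    (h : ∀ x ∈ Set.Ioo a b, S x = c) :
    ∫ x in a..b, Complex.exp (x * Complex.I) * (S x : ℂ)
      = -Complex.I * (Complex.exp (b * Complex.I) - Complex.exp (a * Complex.I)) * c := by
  rw [← int_exp_I, ← intervalIntegral.integral_mul_const,
    intervalIntegral.integral_of_le hab, intervalIntegral.integral_of_le hab,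
    MeasureTheory.integral_Ioc_eq_integral_Ioo, MeasureTheory.integral_Ioc_eq_integral_Ioo]
  refine MeasureTheory.setIntegral_congr_fun measurableSet_Ioo fun x hx => ?_
  simp only [h x hx]

lemma J_split {S : ℝ → ℝ} (hm : Measurable S) (hb : ∀ x, |S x| ≤ 1) :
    ∫ x in (0:ℝ)..(2 * Real.pi), ((Real.pi - x : ℝ) * Complex.exp (x * Complex.I)) * (S x : ℂ)
    = ((∫ x in (0:ℝ)..(2 * Real.pi), (Real.pi - x) * Real.cos x * S x : ℝ) : ℂ)
      + Complex.I * ((∫ x in (0:ℝ)..(2 * Real.pi), (Real.pi - x) * Real.sin x * S x : ℝ) : ℂ) := by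
  have h1 := ii_mul hm hb (g := fun x : ℝ => (((Real.pi - x) * Real.cos x : ℝ) : ℂ))
    (by fun_prop) 0 (2 * Real.pi)
  have h2 := ii_mul hm hb (g := fun x : ℝ => (((Real.pi - x) * Real.sin x : ℝ) : ℂ))
    (by fun_prop) 0 (2 * Real.pi)
  rw [← intervalIntegral.integral_ofReal, ← intervalIntegral.integral_ofReal,
    ← intervalIntegral.integral_const_mul]
  simp only [Complex.ofReal_mul] at h1 h2 ⊢
  rw [← intervalIntegral.integral_add h1 (h2.const_mul _)]
  congr 1
  funext x
  rw [Complex.exp_mul_I]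
  push_cast
  ring

lemma S1_anti (n : ℕ) (hn : 2 ≤ n) :
    Function.Antiperiodic (fun x => sg (Real.sin (n * x))) (Real.pi / n) := by
  have hn0 : (n:ℝ) ≠ 0 := by positivity
  intro x
  have : (n:ℝ) * (x + Real.pi / n) = n * x + Real.pi := by field_simp
  simp only [this, Real.sin_add_pi, sg_neg]

lemma S2_anti (n : ℕ) (hn : 2 ≤ n) :
    Function.Antiperiodic (fun x => sg (-Real.cos (n * x))) (Real.pi / n) := by
  have hn0 : (n:ℝ) ≠ 0 := by positivity
  intro x
  have : (n:ℝ) * (x + Real.pi / n) = n * x + Real.pi := by field_simp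
  simp only [this, Real.cos_add_pi, sg_neg]

lemma half_facts (n : ℕ) (hn : 2 ≤ n) : ∃ e : ℂ, e ≠ 0 ∧
    Complex.exp ((Real.pi / n : ℝ) * Complex.I) = e ^ 2 ∧
    Complex.exp ((-(Real.pi / n) : ℝ) * Complex.I) = (e ^ 2)⁻¹ ∧
    Complex.exp ((-(Real.pi / (2 * n)) : ℝ) * Complex.I) = e⁻¹ ∧
    (Real.cos (Real.pi / (2 * n)) : ℂ) = (e + e⁻¹) / 2 ∧
    (Real.sin (Real.pi / (2 * n)) : ℂ) = -Complex.I * (e - e⁻¹) / 2 ∧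
    0 < Real.cos (Real.pi / (2 * n)) := by
  have hn2 : (2:ℝ) ≤ n := by exact_mod_cast hn
  have hn0 : (n:ℝ) ≠ 0 := by positivity
  set w := Real.pi / (2 * n) with hw
  have hww : Real.pi / n = 2 * w := by rw [hw]; field_simp
  refine ⟨Complex.exp (w * Complex.I), Complex.exp_ne_zero _, ?_, ?_, ?_, ?_, ?_, ?_⟩
  · rw [hww, ← Complex.exp_nat_mul]; push_cast; ring_nf
  · rw [hww, ← Complex.exp_nat_mul, ← Complex.exp_neg]; push_cast; ring_nf
  · rw [← Complex.exp_neg]; push_cast; ring_nf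
  · rw [← Complex.exp_neg, Complex.ofReal_cos, Complex.cos]; ring_nf
  · rw [← Complex.exp_neg, Complex.ofReal_sin, Complex.sin]; ring_nf
  · have hp := Real.pi_pos
    apply Real.cos_pos_of_mem_Ioo
    have h0 : 0 < w := by positivity
    refine ⟨by linarith, ?_⟩
    rw [hw]
    gcongr
    linarith

lemma value1 (n : ℕ) (hn : 2 ≤ n) :
    ∫ x in (0:ℝ)..(2 * Real.pi), (Real.pi - x) * Real.cos x * sg (Real.sin (n * x))
      = 2 * Real.pi * Real.tan (Real.pi / (2 * n)) := by
  have hn0 : (0:ℝ) < n := by positivity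
  have hp := Real.pi_pos
  have hm : Measurable (fun x : ℝ => sg (Real.sin (n * x))) := sg_meas.comp (by fun_prop)
  have hb : ∀ x : ℝ, |sg (Real.sin (n * x))| ≤ 1 := fun x => sg_abs _
  have h := moment n hn hm hb (S1_anti n hn)
  have hsp := J_split hm hb
  rw [int_const_sign (c := -1) (by simp; positivity)] at h
  · obtain ⟨e, he0, hE, hEi, _, hc, hs, hcp⟩ := half_facts n hn
    have hJ : ∫ x in (0:ℝ)..(2 * Real.pi),
        ((Real.pi - x : ℝ) * Complex.exp (x * Complex.I)) * (sg (Real.sin (n * x)) : ℂ)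
        = ((2 * Real.pi * Real.tan (Real.pi / (2 * n)) : ℝ) : ℂ) := by
      have hcc : (e + e⁻¹) / 2 ≠ 0 := by
        rw [← hc]; exact_mod_cast hcp.ne'
      have hne : 1 + e ^ 2 ≠ 0 := by
        intro h0; apply hcc; field_simp; linear_combination h0
      rw [hE, hEi] at h
      rw [Real.tan_eq_sin_div_cos]
      apply mul_left_cancel₀ hne
      rw [h]
      push_cast [-Complex.ofReal_cos, -Complex.ofReal_sin] at *
      rw [hc, hs]
      have : e ^ 2 + 1 ≠ 0 := by rwa [add_comm]
      simp only [zero_mul, Complex.exp_zero]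
      field_simp
      ring
    rw [hJ] at hsp
    have := congrArg Complex.re hsp
    simp only [Complex.add_re, Complex.ofReal_re, Complex.re_mul_ofReal, Complex.I_re, zero_mul,
      add_zero] at this
    exact this.symm
  · intro x hx
    have : sg (Real.sin (n * x)) = - sg (Real.sin (-(n * x))) := by
      rw [Real.sin_neg, sg_neg, neg_neg]
    rw [this, sg_pos]
    have h1 := hx.1
    rw [neg_lt, lt_div_iff₀ hn0] at h1
    exact Real.sin_pos_of_pos_of_lt_pi (by nlinarith [hx.2]) (by linarith)

lemma value2 (n : ℕ) (hn : 2 ≤ n) :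
    ∫ x in (0:ℝ)..(2 * Real.pi), (Real.pi - x) * Real.sin x * sg (-Real.cos (n * x))
      = 2 * Real.pi * (1 / Real.cos (Real.pi / (2 * n)) - 1) := by
  have hn0 : (0:ℝ) < n := by positivity
  have hp := Real.pi_pos
  have hm : Measurable (fun x : ℝ => sg (-Real.cos (n * x))) := sg_meas.comp (by fun_prop)
  have hb : ∀ x : ℝ, |sg (-Real.cos (n * x))| ≤ 1 := fun x => sg_abs _
  have h := moment n hn hm hb (S2_anti n hn)
  have hsp := J_split hm hb
  have hww : Real.pi / n = 2 * (Real.pi / (2 * n)) := by field_simp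
  have hwpos : 0 < Real.pi / (2 * n) := by positivity
  have hnw : n * (Real.pi / (2 * n)) = Real.pi / 2 := by field_simp
  have i1 := int_const_sign (S := fun x : ℝ => sg (-Real.cos (n * x))) (a := -(Real.pi / n))
    (b := -(Real.pi / (2 * n))) (c := 1) (by linarith) (by
      intro x hx
      apply sg_pos
      rw [neg_pos, ← Real.cos_neg]
      apply Real.cos_neg_of_pi_div_two_lt_of_lt
      · nlinarith [hx.2]
      · nlinarith [hx.1])
  have i2 := int_const_sign (S := fun x : ℝ => sg (-Real.cos (n * x)))
    (a := -(Real.pi / (2 * n))) (b := 0) (c := -1) (by linarith) (by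
      intro x hx
      rw [sg_neg, sg_pos]
      apply Real.cos_pos_of_mem_Ioo
      constructor
      · nlinarith [hx.1]
      · nlinarith [hx.2])
  rw [← intervalIntegral.integral_add_adjacent_intervals
    (ii_mul hm hb (g := fun x : ℝ => Complex.exp (x * Complex.I)) (by fun_prop)
      (-(Real.pi / n)) (-(Real.pi / (2 * n))))
    (ii_mul hm hb (g := fun x : ℝ => Complex.exp (x * Complex.I)) (by fun_prop) _ _), i1, i2] at h
  obtain ⟨e, he0, hE, hEi, hei, hc, hs, hcp⟩ := half_facts n hn
  have hJ : ∫ x in (0:ℝ)..(2 * Real.pi),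
      ((Real.pi - x : ℝ) * Complex.exp (x * Complex.I)) * (sg (-Real.cos (n * x)) : ℂ)
      = Complex.I * ((2 * Real.pi * (1 / Real.cos (Real.pi / (2 * n)) - 1) : ℝ) : ℂ) := by
    have hcc : (e + e⁻¹) / 2 ≠ 0 := by
      rw [← hc]; exact_mod_cast hcp.ne'
    have hne : 1 + e ^ 2 ≠ 0 := by
      intro h0; apply hcc; field_simp; linear_combination h0
    rw [hE, hEi, hei] at h
    apply mul_left_cancel₀ hne
    rw [h]
    push_cast [-Complex.ofReal_cos, -Complex.ofReal_sin] at *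
    rw [hc]
    have : e ^ 2 + 1 ≠ 0 := by rwa [add_comm]
    simp only [zero_mul, Complex.exp_zero]
    field_simp
    ring
  rw [hJ] at hsp
  have := congrArg Complex.im hsp
  simp only [Complex.add_im, Complex.ofReal_im, Complex.im_mul_ofReal, Complex.I_im, one_mul,
    zero_add] at this
  exact this.symm

lemma bern_eq {x : ℝ} (hx : x ∈ Set.Ioo 0 (2 * Real.pi)) :
    Bern 1 x = ((Real.pi - x : ℝ) : ℂ) := by
  have hp := Real.pi_pos
  have : ⌊x / (2 * Real.pi)⌋ = 0 := by
    rw [Int.floor_eq_zero_iff]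
    exact ⟨div_nonneg hx.1.le (by positivity), (div_lt_one (by positivity)).2 hx.2⟩
  simp [Bern, this]

lemma finish (n : ℕ) (hn : 2 ≤ n) {g h t : ℝ → ℝ} (hg : Continuous g) (hh : Continuous h)
    (ha : Function.Antiperiodic (fun x => sg (h x)) (Real.pi / n)) (v : ℝ)
    (hv : ∫ x in (0:ℝ)..(2 * Real.pi), (Real.pi - x) * g x * sg (h x) = 2 * Real.pi * v)
    (ht : (fun θ => (t θ : ℂ)) ∈ trigPoly (n - 1))
    (hG : ∀ θ ∈ Set.Ioo 0 (2 * Real.pi), ∃ G, 0 ≤ G ∧ (Real.pi - θ) * g θ - t θ = h θ * G) :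
    bestApprox (n - 1) (fun θ => Bern 1 θ * (g θ : ℂ)) = v := by
  refine bestApprox_eq n (by omega) (S := fun x => sg (h x)) (sg_meas.comp hh.measurable)
    (fun x => sg_abs _) ha (K := fun x => (((Real.pi - x) * g x : ℝ) : ℂ)) (by fun_prop) ?_ v ?_
    ht ?_
  · intro x hx
    simp only [bern_eq hx]
    push_cast; ring
  · rw [← hv, ← intervalIntegral.integral_ofReal]
    congr 1
    funext x
    push_cast; ring
  · intro x hx
    obtain ⟨G, hG0, hGe⟩ := hG x hx
    rw [← Complex.ofReal_sub, hGe, ← Complex.ofReal_mul, Complex.norm_real, Real.norm_eq_abs,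
      abs_mul, abs_of_nonneg hG0, ← sg_mul]
    congr 1
    ring

/-- Best `L¹` approximation of the quasi-Bernoulli kernels: for `n ≥ 2`,
`E_{n−1}(B_1 cos θ)_{L¹} = tan(π/(2n))` and `E_{n−1}(B_1 sin θ)_{L¹} = sec(π/(2n)) − 1`. -/
theorem bestApprox_quasiBernoulli (n : ℕ) (hn : 2 ≤ n) :
    bestApprox (n - 1) (fun θ => Bern 1 θ * (Real.cos θ : ℂ)) =
      Real.tan (Real.pi / (2 * n)) ∧
    bestApprox (n - 1) (fun θ => Bern 1 θ * (Real.sin θ : ℂ)) =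
      1 / Real.cos (Real.pi / (2 * n)) - 1 := by
  obtain ⟨p, rfl⟩ : ∃ p, n = p + 2 := ⟨n - 2, by omega⟩
  constructor
  · obtain ⟨t, ht, hG⟩ := approx1 p
    exact finish (p + 2) hn Real.continuous_cos (by fun_prop) (S1_anti _ hn) _ (value1 _ hn) ht hG
  · obtain ⟨t, ht, hG⟩ := approx2 p
    exact finish (p + 2) hn Real.continuous_sin (by fun_prop) (S2_anti _ hn) _ (value2 _ hn) ht hG
end

section
/- Let f : [−1,1] → ℝ be absolutely continuous with |f′(x)| ≤ 1 almost everywhere. Then for every n ≥ 2 there exists an algebraic polynomial P_n of degree ≤ n such that |f(x) − P_n(x)| ≤ tan(π/(2n))·√(1−x²) + (sec(π/(2n)) − 1)·|x| for all x ∈ [−1,1]. -/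
open Real Polynomial Finset intervalIntegral

lemma den_pos {x : ℝ} (hx : x ∈ Set.Ioo (-1:ℝ) 1) (r : ℝ) : 0 < 1 - 2 * r * x + r ^ 2 := by
  have : 0 < 1 - x^2 := by nlinarith [hx.1, hx.2]
  nlinarith [sq_nonneg (r - x)]

lemma integral_kernel {θ : ℝ} (hθ : θ ∈ Set.Ioo 0 π) :
    ∫ r in (0:ℝ)..1, 2 / (1 - 2 * r * cos θ + r ^ 2) = (π - θ) / sin θ := by
  have hs : 0 < sin θ := sin_pos_of_mem_Ioo hθ
  have hx : cos θ ∈ Set.Ioo (-1:ℝ) 1 := by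
    constructor
    · rw [← cos_pi]; exact cos_lt_cos_of_nonneg_of_le_pi hθ.1.le le_rfl hθ.2
    · rw [← cos_zero]; exact cos_lt_cos_of_nonneg_of_le_pi le_rfl hθ.2.le hθ.1
  have hd : ∀ r ∈ Set.uIcc (0:ℝ) 1, HasDerivAt (fun r => 2 / sin θ * arctan ((r - cos θ) / sin θ))
      (2 / (1 - 2 * r * cos θ + r ^ 2)) r := by
    intro r _
    have h1 := ((((hasDerivAt_id r).sub_const (cos θ)).div_const (sin θ)).arctan).const_mul (2 / sin θ)
    refine h1.congr_deriv ?_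
    have h2 := den_pos hx r
    have h3 : 1 - 2 * r * cos θ + r ^ 2 = sin θ ^ 2 + (r - cos θ) ^ 2 := by
      have := sin_sq_add_cos_sq θ
      linear_combination -this
    rw [h3] at h2 ⊢
    simp only [id]
    field_simp
  have hc : ContinuousOn (fun r : ℝ => 2 / (1 - 2 * r * cos θ + r ^ 2)) (Set.uIcc 0 1) := by
    apply ContinuousOn.div (by fun_prop) (by fun_prop)
    intro r _; exact (den_pos hx r).ne'
  rw [integral_eq_sub_of_hasDerivAt hd hc.intervalIntegrable]
  have e1 : arctan ((1 - cos θ) / sin θ) = θ / 2 := by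
    have : (1 - cos θ) / sin θ = tan (θ / 2) := by
      have hc2 : 0 < cos (θ/2) := cos_pos_of_mem_Ioo ⟨by linarith [hθ.1, pi_pos], by linarith [hθ.2]⟩
      have hs2 : 0 < sin (θ/2) := sin_pos_of_pos_of_lt_pi (by linarith [hθ.1]) (by linarith [hθ.2, pi_pos])
      have a1 : cos θ = 2 * cos (θ/2)^2 - 1 := by rw [← cos_two_mul]; ring_nf
      have a2 : sin θ = 2 * sin (θ/2) * cos (θ/2) := by rw [← sin_two_mul]; ring_nf
      rw [a1, a2, tan_eq_sin_div_cos]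
      field_simp
      linear_combination -2 * sin_sq_add_cos_sq (θ/2)
    rw [this, arctan_tan (by linarith [hθ.1, pi_pos]) (by linarith [hθ.2])]
  have e2 : arctan ((0 - cos θ) / sin θ) = θ - π / 2 := by
    have : (0 - cos θ) / sin θ = tan (θ - π/2) := by
      rw [tan_eq_sin_div_cos, sin_sub_pi_div_two, cos_sub_pi_div_two]; ring
    rw [this, arctan_tan (by linarith [hθ.1, pi_pos]) (by linarith [hθ.2])]
  rw [e1, e2]
  field_simp; ring

lemma interp_err (S : Finset ℝ) (N ρ : ℝ[X]) (hN : N.natDegree ≤ #S) (hNS : ∀ y ∈ S, N.eval y = 0)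
    (a γ : ℝ) (ha : N.eval a ≠ 0) (hρ : ρ.degree < #S) (x : ℝ) (hxa : x ≠ a) :
    ρ.eval x + γ / (a - x) - (Lagrange.interpolate S id (fun y => ρ.eval y + γ / (a - y))).eval x
      = γ * N.eval x / (N.eval a * (a - x)) := by
  have haS : a ∉ S := fun h => ha (hNS a h)
  set q := Lagrange.interpolate S id (fun y => ρ.eval y + γ / (a - y)) with hq
  have hqd : q.degree < #S := Lagrange.degree_interpolate_lt _ (Function.injective_id.injOn)
  have hqe : ∀ y ∈ S, q.eval y = ρ.eval y + γ / (a - y) := fun y hy =>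
    Lagrange.eval_interpolate_at_node (v := id) _ (Function.injective_id.injOn) hy
  have key : C γ - (C a - X) * (q - ρ) = C (γ / N.eval a) * N := by
    apply eq_of_degrees_lt_of_eval_finset_eq (insert a S)
    · rw [card_insert_of_notMem haS]
      have : (q - ρ).degree < #S := (degree_sub_le _ _).trans_lt (max_lt hqd hρ)
      by_cases h0 : q - ρ = 0
      · rw [h0, mul_zero, sub_zero]
        exact degree_C_le.trans_lt (by exact_mod_cast Nat.succ_pos _)
      have h1 : (q - ρ).natDegree < #S := (natDegree_lt_iff_degree_lt h0).2 this
      apply (degree_le_natDegree).trans_lt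
      norm_cast
      have : (C γ - (C a - X) * (q - ρ)).natDegree ≤ 1 + (q-ρ).natDegree := by
        generalize q - ρ = d
        compute_degree!
      omega
    · rw [card_insert_of_notMem haS]
      apply (degree_le_natDegree).trans_lt
      norm_cast
      have := natDegree_C_mul_le (γ / N.eval a) N
      omega
    · intro y hy
      rcases mem_insert.1 hy with rfl | hy
      · simp; field_simp
      · have : a - y ≠ 0 := fun h => haS (by rwa [sub_eq_zero.1 h])
        simp [hNS y hy, hqe y hy]
        field_simp; simp
  have k := congrArg (eval x) key
  simp at k
  have hax : a - x ≠ 0 := sub_ne_zero.2 hxa.symm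
  field_simp
  field_simp at k
  linear_combination k

lemma interp_sign (S : Finset ℝ) (hS : ∀ y ∈ S, y ∈ Set.Ioo (-1:ℝ) 1) (N : ℝ[X])
    (hN : N.natDegree ≤ #S) (hNS : ∀ y ∈ S, N.eval y = 0) (hNpos : ∀ a, 1 < a → 0 < N.eval a)
    (v g : ℝ → ℝ) (hg : ∀ x ∈ Set.Ioo (-1:ℝ) 1, ∫ r in (0:ℝ)..1, 2 / (1 - 2 * r * x + r ^ 2) = g x)
    (ρ : ℝ → ℝ[X]) (γ : ℝ → ℝ) (hρ : ∀ r, (ρ r).degree < #S) (ε : ℝ)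
    (hγ : ∀ r ∈ Set.Ioo (0:ℝ) 1, 0 ≤ ε * γ r)
    (hv : ∀ r ∈ Set.Ioo (0:ℝ) 1, ∀ x ∈ Set.Ioo (-1:ℝ) 1,
      v x * (2 / (1 - 2 * r * x + r ^ 2)) = (ρ r).eval x + γ r / ((1 + r ^ 2) / (2 * r) - x))
    (x : ℝ) (hx : x ∈ Set.Ioo (-1:ℝ) 1) :
    0 ≤ ε * (v x * g x - (Lagrange.interpolate S id (fun y => v y * g y)).eval x) * N.eval x := by
  have hint : ∀ x ∈ Set.Ioo (-1:ℝ) 1, IntervalIntegrable (fun r : ℝ => 2 / (1 - 2 * r * x + r ^ 2)) MeasureTheory.volume 0 1 := by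
    intro x hx
    apply ContinuousOn.intervalIntegrable
    apply ContinuousOn.div (by fun_prop) (by fun_prop)
    intro r _; exact (den_pos hx r).ne'
  have e : ε * (v x * g x - (Lagrange.interpolate S id (fun y => v y * g y)).eval x) * N.eval x
    = ∫ r in (0:ℝ)..1, ε * (v x * (2 / (1 - 2 * r * x + r ^ 2)) -
        ∑ y ∈ S, v y * (2 / (1 - 2 * r * y + r ^ 2)) * (Lagrange.basis S id y).eval x) * N.eval x := by
    rw [integral_mul_const, integral_const_mul, integral_sub, integral_const_mul, hg x hx,
      integral_finsetSum, Lagrange.interpolate_apply, eval_finsetSum]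
    · congr 3
      apply sum_congr rfl
      intro y hy
      rw [integral_mul_const, integral_const_mul, hg y (hS y hy)]
      simp
    · intro y hy
      exact ((hint y (hS y hy)).const_mul _).mul_const _
    · exact (hint x hx).const_mul _
    · have := IntervalIntegrable.sum (μ := MeasureTheory.volume) (a := 0) (b := 1) S (f := fun y r => v y * (2 / (1 - 2 * r * y + r ^ 2)) * (Lagrange.basis S id y).eval x)
        (fun y hy => ((hint y (hS y hy)).const_mul _).mul_const _)
      have e3 : (fun r : ℝ => ∑ y ∈ S, v y * (2 / (1 - 2 * r * y + r ^ 2)) * (Lagrange.basis S id y).eval x)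
          = ∑ y ∈ S, fun r : ℝ => v y * (2 / (1 - 2 * r * y + r ^ 2)) * (Lagrange.basis S id y).eval x := by
        ext r; simp
      rw [e3]; exact this
  rw [e]
  apply integral_nonneg_of_ae_restrict zero_le_one
  rw [← MeasureTheory.Measure.restrict_congr_set MeasureTheory.Ioo_ae_eq_Icc]
  rw [Filter.EventuallyLE, MeasureTheory.ae_restrict_iff' measurableSet_Ioo]
  apply Filter.Eventually.of_forall
  intro r hr
  have ha : 1 < (1 + r ^ 2) / (2 * r) := by
    rw [lt_div_iff₀ (by linarith [hr.1])]; nlinarith [hr.2, sq_pos_of_pos (sub_pos.2 hr.2)]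
  have := interp_err S N (ρ r) hN hNS _ (γ r) (hNpos _ ha).ne' (hρ r) x (by linarith [hx.2] : x < _).ne
  rw [Lagrange.interpolate_apply, eval_finsetSum, ← hv r hr x hx] at this
  have e2 : ∑ y ∈ S, v y * (2 / (1 - 2 * r * y + r ^ 2)) * (Lagrange.basis S id y).eval x =
     ∑ y ∈ S, eval x (C ((ρ r).eval y + γ r / ((1 + r ^ 2) / (2 * r) - y)) * Lagrange.basis S id y) := by
    apply sum_congr rfl
    intro y hy
    rw [hv r hr y (hS y hy)]; simp
  simp only [Pi.zero_apply]
  rw [e2, this]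
  have h1 : 0 < (1 + r ^ 2) / (2 * r) - x := by linarith [hx.2]
  have h2 := hNpos _ ha
  have h3 := hγ r hr
  have : ε * (γ r * N.eval x / (N.eval ((1 + r ^ 2) / (2 * r)) * ((1 + r ^ 2) / (2 * r) - x))) * N.eval x
    = (ε * γ r) * (N.eval x)^2 / (N.eval ((1 + r ^ 2) / (2 * r)) * ((1 + r ^ 2) / (2 * r) - x)) := by
    ring
  rw [this]
  positivity

lemma hg_kernel (x : ℝ) (hx : x ∈ Set.Ioo (-1:ℝ) 1) :
    ∫ r in (0:ℝ)..1, 2 / (1 - 2 * r * x + r ^ 2) = (π - arccos x) / sin (arccos x) := by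
  have h := integral_kernel (θ := arccos x) ⟨arccos_pos.2 hx.2, ?_⟩
  · rwa [cos_arccos hx.1.le hx.2.le] at h
  · have := arccos_lt_pi.2 hx.1
    exact this

lemma cos_mem_Ioo' {θ : ℝ} (hθ : θ ∈ Set.Ioo 0 π) : cos θ ∈ Set.Ioo (-1:ℝ) 1 := by
  constructor
  · rw [← cos_pi]; exact cos_lt_cos_of_nonneg_of_le_pi hθ.1.le le_rfl hθ.2
  · rw [← cos_zero]; exact cos_lt_cos_of_nonneg_of_le_pi le_rfl hθ.2.le hθ.1

lemma U_pos (m : ℕ) (a : ℝ) (ha : 1 < a) : 0 < (Chebyshev.U ℝ m).eval a := by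
  induction m with
  | zero => simp
  | succ k ih =>
    push_cast
    rw [Chebyshev.U_eq_X_mul_U_add_T]
    have := Chebyshev.one_le_eval_T_real (k + 1) ha.le
    simp only [eval_add, eval_mul, eval_X]
    have : 0 < a * (Chebyshev.U ℝ k).eval a := by positivity
    linarith

noncomputable def chebUseq : Polynomial.Sequence ℝ where
  elems' n := Chebyshev.U ℝ n
  degree_eq' n := Chebyshev.degree_U_natCast ℝ n

lemma expand_U (m : ℕ) (p : ℝ[X]) (hp : p.degree < m) :
    ∃ c : ℕ → ℝ, p = ∑ k ∈ range m, c k • Chebyshev.U ℝ k := by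
  have hmem : p ∈ degreeLT ℝ m := by rwa [mem_degreeLT]
  rw [← Sequence.span_degreeLT chebUseq (by
      intro i _
      rw [isUnit_iff_ne_zero, leadingCoeff_ne_zero]
      exact chebUseq.ne_zero i),
    show Set.Iio m = Finset.range m by simp,
    Submodule.mem_span_image_finset_iff_exists_fun'] at hmem
  obtain ⟨c, hc⟩ := hmem
  exact ⟨c, hc.symm⟩

lemma expand_T (m : ℕ) (p : ℝ[X]) (hp : p.degree < m) :
    ∃ c : ℕ → ℝ, p = ∑ k ∈ range m, c k • Chebyshev.T ℝ k := by
  have hmem : p ∈ degreeLT ℝ m := by rwa [mem_degreeLT]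
  rw [← Sequence.span_degreeLT (Chebyshev.chebyshevTsequence ℝ) (by simp),
    show Set.Iio m = Finset.range m by simp,
    Submodule.mem_span_image_finset_iff_exists_fun'] at hmem
  obtain ⟨c, hc⟩ := hmem
  exact ⟨c, hc.symm⟩

lemma exists_T1 (m : ℕ) (hm : 1 ≤ m) : ∃ b : ℕ → ℝ, ∀ θ ∈ Set.Ioo 0 π,
    0 ≤ ((π - θ) * cos θ - ∑ k ∈ range m, b k * sin ((k + 1) * θ)) * sin ((m + 1) * θ) := by
  set S := (range m).image (fun (k : ℕ) => cos ((k + 1) * π / (m + 1))) with hSdef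
  have hcard : #S = m := by
    rw [hSdef, card_image_of_injOn, card_range]
    exact (Finset.range m).nodup_map_iff_injOn.mp (Chebyshev.roots_U_real_nodup m)
  have hS : ∀ y ∈ S, y ∈ Set.Ioo (-1:ℝ) 1 := by
    intro y hy
    obtain ⟨k, hk, rfl⟩ := mem_image.1 hy
    apply cos_mem_Ioo'
    refine ⟨by positivity, ?_⟩
    rw [div_lt_iff₀ (by positivity), mul_comm]
    have : (k:ℝ) < m := by exact_mod_cast mem_range.1 hk
    have := pi_pos
    gcongr
  have hNS : ∀ y ∈ S, (Chebyshev.U ℝ m).eval y = 0 := by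
    intro y hy
    have : y ∈ (Chebyshev.U ℝ m).roots := by
      rw [Chebyshev.roots_U_real]; exact hy
    exact (mem_roots'.1 this).2
  obtain ⟨b, hb⟩ := expand_U m (Lagrange.interpolate S id (fun y => y * ((π - arccos y) / sin (arccos y))))
    (by have := Lagrange.degree_interpolate_lt (s := S) (v := id) (fun y => y * ((π - arccos y) / sin (arccos y))) Function.injective_id.injOn
        rwa [hcard] at this)
  refine ⟨b, fun θ hθ => ?_⟩
  have key := interp_sign S hS (Chebyshev.U ℝ m) (by rw [Chebyshev.natDegree_U_natCast, hcard]) hNS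
    (U_pos m) (fun y => y) (fun y => (π - arccos y) / sin (arccos y)) hg_kernel
    (fun r => C (-1 / r)) (fun r => (1 + r^2) / (2 * r) / r) (fun r => by
      rw [hcard]; exact degree_C_le.trans_lt (by exact_mod_cast hm)) 1
    (fun r hr => by have := hr.1; positivity)
    (fun r hr x hx => by
      have h0 := hr.1.ne'
      have h1 := den_pos hx r
      have h2 : (1 + r ^ 2) / (2 * r) - x = (1 - 2 * r * x + r ^ 2) / (2 * r) := by
        field_simp; ring
      rw [h2, eval_C]
      generalize hD : 1 - 2 * r * x + r ^ 2 = D at h1 ⊢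
      have hxD : x = (1 + r ^ 2 - D) / (2 * r) := by rw [← hD]; field_simp; ring
      rw [hxD]
      field_simp
      ring) (cos θ) (cos_mem_Ioo' hθ)
  rw [hb] at key
  have hs : 0 < sin θ := sin_pos_of_mem_Ioo hθ
  have e1 : (Chebyshev.U ℝ m).eval (cos θ) * sin θ = sin ((m + 1) * θ) := by
    exact_mod_cast Chebyshev.U_real_cos θ m
  have e2 : sin θ * (∑ k ∈ range m, b k • Chebyshev.U ℝ k).eval (cos θ) = ∑ k ∈ range m, b k * sin ((k + 1) * θ) := by
    rw [eval_finsetSum, mul_sum]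
    apply sum_congr rfl
    intro k _
    have : (Chebyshev.U ℝ k).eval (cos θ) * sin θ = sin ((k + 1) * θ) := by
      exact_mod_cast Chebyshev.U_real_cos θ k
    rw [eval_smul, smul_eq_mul, ← this]; ring
  rw [← e1, ← e2]
  rw [arccos_cos hθ.1.le hθ.2.le] at key
  have e3 : ((π - θ) * cos θ - sin θ * (∑ k ∈ range m, b k • Chebyshev.U ℝ k).eval (cos θ)) *
      ((Chebyshev.U ℝ m).eval (cos θ) * sin θ) = sin θ ^ 2 * (1 * (cos θ * ((π - θ) / sin θ) - (∑ k ∈ range m, b k • Chebyshev.U ℝ k).eval (cos θ)) *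
      (Chebyshev.U ℝ m).eval (cos θ)) := by
    field_simp
  rw [e3]
  positivity

lemma exists_T2 (n : ℕ) (hn : 2 ≤ n) : ∃ b : ℕ → ℝ, ∀ θ ∈ Set.Ioo 0 π,
    0 ≤ -((π - θ) * sin θ - ∑ k ∈ range n, b k * cos (k * θ)) * cos (n * θ) := by
  have hn0 : (0:ℝ) < n := by exact_mod_cast (by omega : 0 < n)
  set S := (range n).image (fun (k : ℕ) => cos ((2 * k + 1) * π / (2 * n))) with hSdef
  have hcard : #S = n := by
    rw [hSdef, card_image_of_injOn, card_range]
    exact (Finset.range n).nodup_map_iff_injOn.mp (Chebyshev.roots_T_real_nodup n)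
  have hS : ∀ y ∈ S, y ∈ Set.Ioo (-1:ℝ) 1 := by
    intro y hy
    obtain ⟨k, hk, rfl⟩ := mem_image.1 hy
    apply cos_mem_Ioo'
    refine ⟨by positivity, ?_⟩
    rw [div_lt_iff₀ (by positivity), mul_comm]
    have : (k:ℝ) + 1 ≤ n := by exact_mod_cast mem_range.1 hk
    have := pi_pos
    gcongr
    linarith
  have hNS : ∀ y ∈ S, (Chebyshev.T ℝ n).eval y = 0 := by
    intro y hy
    have : y ∈ (Chebyshev.T ℝ n).roots := by
      rw [Chebyshev.roots_T_real]; exact hy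
    exact (mem_roots'.1 this).2
  obtain ⟨b, hb⟩ := expand_T n (Lagrange.interpolate S id (fun y => (1 - y^2) * ((π - arccos y) / sin (arccos y))))
    (by have := Lagrange.degree_interpolate_lt (s := S) (v := id) (fun y => (1 - y^2) * ((π - arccos y) / sin (arccos y))) Function.injective_id.injOn
        rwa [hcard] at this)
  refine ⟨b, fun θ hθ => ?_⟩
  have key := interp_sign S hS (Chebyshev.T ℝ n) (by rw [Chebyshev.natDegree_T, hcard]; simp) hNS
    (fun a ha => zero_lt_one.trans_le (Chebyshev.one_le_eval_T_real n ha.le)) (fun y => 1 - y^2)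
    (fun y => (π - arccos y) / sin (arccos y)) hg_kernel
    (fun r => C (1 / r) * (C ((1 + r^2) / (2 * r)) + X)) (fun r => (1 - ((1 + r^2) / (2 * r))^2) / r) (fun r => by
      rw [hcard]
      refine degree_le_natDegree.trans_lt ?_
      have : (C (1 / r) * (C ((1 + r^2) / (2 * r)) + X)).natDegree ≤ 1 := by compute_degree!
      exact_mod_cast (by omega)) (-1)
    (fun r hr => by
      have ha : 1 < (1 + r ^ 2) / (2 * r) := by
        rw [lt_div_iff₀ (by linarith [hr.1])]; nlinarith [hr.2, sq_pos_of_pos (sub_pos.2 hr.2)]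
      have : 0 ≤ ((1 + r ^ 2) / (2 * r))^2 - 1 := by nlinarith
      have h0 := hr.1
      have e : -1 * ((1 - ((1 + r^2) / (2 * r))^2) / r) = (((1 + r ^ 2) / (2 * r))^2 - 1) / r := by ring
      rw [e]; positivity)
    (fun r hr x hx => by
      have h0 := hr.1.ne'
      have h1 := den_pos hx r
      have h2 : (1 + r ^ 2) / (2 * r) - x = (1 - 2 * r * x + r ^ 2) / (2 * r) := by
        field_simp; ring
      rw [h2]
      simp only [eval_mul, eval_add, eval_C, eval_X]
      generalize hD : 1 - 2 * r * x + r ^ 2 = D at h1 ⊢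
      have hxD : x = (1 + r ^ 2 - D) / (2 * r) := by rw [← hD]; field_simp; ring
      rw [hxD]
      field_simp
      ring) (cos θ) (cos_mem_Ioo' hθ)
  rw [hb] at key
  have hs : 0 < sin θ := sin_pos_of_mem_Ioo hθ
  have e1 : (Chebyshev.T ℝ n).eval (cos θ) = cos (n * θ) := by
    exact_mod_cast Chebyshev.T_real_cos θ n
  have e2 : (∑ k ∈ range n, b k • Chebyshev.T ℝ k).eval (cos θ) = ∑ k ∈ range n, b k * cos (k * θ) := by
    rw [eval_finsetSum]
    apply sum_congr rfl
    intro k _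
    have : (Chebyshev.T ℝ k).eval (cos θ) = cos (k * θ) := by
      exact_mod_cast Chebyshev.T_real_cos θ k
    rw [eval_smul, smul_eq_mul, ← this]
  rw [arccos_cos hθ.1.le hθ.2.le, e1, e2] at key
  have e3 : (1 - cos θ ^ 2) * ((π - θ) / sin θ) = (π - θ) * sin θ := by
    rw [← sin_sq]; field_simp
  rw [e3] at key
  linarith

lemma alt_telescope (D : ℕ → ℝ) (n : ℕ) :
    ∑ j ∈ range n, (-1:ℝ) ^ j * (D j + D (j + 1)) = D 0 - (-1) ^ n * D n := by
  induction n with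
  | zero => simp
  | succ k ih => rw [sum_range_succ, ih]; ring

lemma sin_mid (α β : ℝ) : sin α + sin (α + β) = 2 * cos (β / 2) * sin (α + β / 2) := by
  have e1 : α = (α + β / 2) - β / 2 := by ring
  have e2 : α + β = (α + β / 2) + β / 2 := by ring
  conv_lhs => rw [e2]; 
  conv_lhs => arg 1; rw [e1]
  rw [sin_sub, sin_add (α + β / 2)]; ring

lemma cos_mid (α β : ℝ) : cos α + cos (α + β) = 2 * cos (β / 2) * cos (α + β / 2) := by
  have e1 : α = (α + β / 2) - β / 2 := by ring
  have e2 : α + β = (α + β / 2) + β / 2 := by ring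
  conv_lhs => rw [e2]; 
  conv_lhs => arg 1; rw [e1]
  rw [cos_sub, cos_add (α + β / 2)]; ring

lemma sin_diff (α β : ℝ) (h : cos (β / 2) ≠ 0) :
    sin (α + β) - sin α = tan (β / 2) * (cos α + cos (α + β)) := by
  rw [cos_mid, tan_eq_sin_div_cos]
  have e1 : α = (α + β / 2) - β / 2 := by ring
  have e2 : α + β = (α + β / 2) + β / 2 := by ring
  conv_lhs => rw [e2]; 
  conv_lhs => arg 2; rw [e1]
  rw [sin_sub, sin_add (α + β / 2)]
  field_simp; ring

lemma cos_diff (α β : ℝ) (h : cos (β / 2) ≠ 0) :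
    cos (α + β) - cos α = -tan (β / 2) * (sin α + sin (α + β)) := by
  rw [sin_mid, tan_eq_sin_div_cos]
  have e1 : α = (α + β / 2) - β / 2 := by ring
  have e2 : α + β = (α + β / 2) + β / 2 := by ring
  conv_lhs => rw [e2]; 
  conv_lhs => arg 2; rw [e1]
  rw [cos_sub, cos_add (α + β / 2)]
  field_simp; ring

lemma abs_integral (E A : ℝ → ℝ) (hE : Continuous E) (hA : ∀ x, HasDerivAt A (E x) x) (a b σ : ℝ)
    (hab : a ≤ b) (hσ : |σ| = 1) (h : ∀ x ∈ Set.Ioo a b, 0 ≤ σ * E x) :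
    ∫ x in a..b, |E x| = σ * (A b - A a) := by
  rw [← integral_eq_sub_of_hasDerivAt (fun x _ => hA x) (hE.intervalIntegrable _ _),
    ← integral_const_mul]
  rw [integral_of_le hab, integral_of_le hab, MeasureTheory.integral_Ioc_eq_integral_Ioo,
    MeasureTheory.integral_Ioc_eq_integral_Ioo]
  apply MeasureTheory.setIntegral_congr_fun measurableSet_Ioo
  intro x hx
  have := h x hx
  simp only
  rw [← abs_of_nonneg this, abs_mul, hσ, one_mul]

lemma cos_half_ne (n k : ℕ) (h : k < n) : cos ((k:ℝ) * (π / n) / 2) ≠ 0 := by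
  have hn : (0:ℝ) < n := by exact_mod_cast (by omega : 0 < n)
  have hk : (k:ℝ) < n := by exact_mod_cast h
  apply ne_of_gt
  apply cos_pos_of_mem_Ioo
  constructor
  · have : 0 ≤ (k:ℝ) * (π / n) / 2 := by positivity
    linarith [pi_pos]
  · have : (k:ℝ) * (π / n) < π := by
      rw [← mul_div_assoc, div_lt_iff₀ hn, mul_comm]
      have := pi_pos
      gcongr
    linarith

lemma norm1 (m : ℕ) (hm : 1 ≤ m) (b : ℕ → ℝ) (h : ∀ θ ∈ Set.Ioo 0 π,
    0 ≤ ((π - θ) * cos θ - ∑ k ∈ range m, b k * sin ((k + 1) * θ)) * sin ((m + 1) * θ)) :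
    ∫ θ in (0:ℝ)..π, |(π - θ) * cos θ - ∑ k ∈ range m, b k * sin ((k + 1) * θ)|
      = π * tan (π / (2 * (m + 1))) := by
  set n := m + 1 with hn
  have hnR : (n:ℝ) = m + 1 := by rw [hn]; push_cast; ring
  have hn0 : (0:ℝ) < n := by rw [hnR]; positivity
  set E : ℝ → ℝ := fun θ => (π - θ) * cos θ - ∑ k ∈ range m, b k * sin ((k + 1) * θ) with hEdef
  set φ : ℝ := π / n with hφ
  have hφ0 : 0 < φ := by have := pi_pos; positivity
  have hnφ : n * φ = π := by rw [hφ]; field_simp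
  set A : ℝ → ℝ := fun θ => (π - θ) * sin θ - cos θ + ∑ k ∈ range m, b k / (k + 1) * cos ((k + 1) * θ)
    with hAdef
  have hE : Continuous E := by fun_prop
  have hA : ∀ x, HasDerivAt A (E x) x := by
    intro x
    have h1 := (((hasDerivAt_id x).const_sub π).mul (hasDerivAt_sin x)).sub (hasDerivAt_cos x)
    have h2 : HasDerivAt (fun θ => ∑ k ∈ range m, b k / (k + 1) * cos ((k + 1) * θ))
        (∑ k ∈ range m, -(b k * sin ((k + 1) * x))) x := by
      apply HasDerivAt.fun_sum
      intro k _
      have h3 := (((hasDerivAt_id x).const_mul ((k:ℝ) + 1)).cos).const_mul (b k / (k + 1))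
      refine h3.congr_deriv ?_
      have : (k:ℝ) + 1 ≠ 0 := by positivity
      simp only [id]
      field_simp
    refine (h1.add h2).congr_deriv ?_
    simp only [hEdef, id, sum_neg_distrib]
    ring
  have hsum := sum_integral_adjacent_intervals (f := fun x => |E x|) (μ := MeasureTheory.volume)
    (a := fun j : ℕ => j * φ) (n := n) (fun k _ => (hE.abs).intervalIntegrable _ _)
  simp only [Nat.cast_zero, zero_mul, hnφ] at hsum
  rw [← hsum]
  have hpiece : ∀ j ∈ range n, ∫ x in (j:ℝ) * φ..((j + 1 : ℕ):ℝ) * φ, |E x| =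
      (-1) ^ j * (A (((j + 1 : ℕ):ℝ) * φ) - A (j * φ)) := by
    intro j hj
    have hjn : (j:ℝ) + 1 ≤ n := by exact_mod_cast mem_range.1 hj
    apply abs_integral E A hE hA
    · push_cast; nlinarith
    · simp
    · intro x hx
      push_cast at hx
      have hx0 : x ∈ Set.Ioo 0 π := by
        constructor
        · exact lt_of_le_of_lt (by positivity) hx.1
        · refine hx.2.trans_le ?_
          rw [← hnφ]; gcongr
      have h1 := h x hx0
      have h2 : 0 < (-1:ℝ) ^ j * sin ((m + 1) * x) := by
        rw [← sin_sub_nat_mul_pi]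
        rw [← hnR]
        apply sin_pos_of_pos_of_lt_pi
        · rw [← hnφ]; nlinarith [hx.1]
        · rw [← hnφ]; nlinarith [hx.2]
      have h3 : 0 ≤ ((-1:ℝ) ^ j * E x) * ((-1:ℝ) ^ j * sin ((m + 1) * x)) := by
        have : ((-1:ℝ) ^ j * E x) * ((-1:ℝ) ^ j * sin ((m + 1) * x)) = ((-1:ℝ)^j * (-1)^j) * (E x * sin ((m + 1) * x)) := by ring
        rw [this, ← mul_pow]; simpa using h1
      exact nonneg_of_mul_nonneg_left h3 h2
  rw [sum_congr rfl hpiece]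
  set t := tan (φ / 2) with ht
  have hc1 : cos (φ / 2) ≠ 0 := by
    have := cos_half_ne n 1 (by omega)
    simpa using this
  set D : ℕ → ℝ := fun j => (n - j) * φ * t * cos (j * φ) - 1 / 2 * φ * (1 + t ^ 2) * sin (j * φ)
    + t * sin (j * φ) - ∑ k ∈ range m, b k / (k + 1) * tan ((k + 1) * φ / 2) * sin ((k + 1) * (j * φ)) with hD
  have hAD : ∀ j ∈ range n, (-1:ℝ) ^ j * (A (((j + 1 : ℕ):ℝ) * φ) - A (j * φ)) = (-1) ^ j * (D j + D (j + 1)) := by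
    intro j _
    congr 1
    have e1 : ((j + 1 : ℕ):ℝ) * φ = j * φ + φ := by push_cast; ring
    have s1 := sin_diff (j * φ) φ hc1
    have c1 := cos_diff (j * φ) φ hc1
    have hs : ∑ k ∈ range m, b k / (k + 1) * cos ((k + 1) * (j * φ + φ)) - ∑ k ∈ range m, b k / (k + 1) * cos ((k + 1) * (j * φ))
      = - ∑ k ∈ range m, b k / (k + 1) * tan ((k + 1) * φ / 2) * sin ((k + 1) * (j * φ))
        - ∑ k ∈ range m, b k / (k + 1) * tan ((k + 1) * φ / 2) * sin ((k + 1) * (j * φ + φ)) := by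
      rw [← sum_neg_distrib, ← sum_sub_distrib, ← sum_sub_distrib]
      apply sum_congr rfl
      intro k hk
      have hk' := mem_range.1 hk
      have c2 := cos_half_ne n (k + 1) (by omega)
      push_cast at c2
      have := cos_diff ((k + 1) * (j * φ)) ((k + 1) * φ) c2
      rw [show ((k:ℝ) + 1) * (j * φ + φ) = (k + 1) * (j * φ) + (k + 1) * φ by ring]
      linear_combination (b k / (k + 1)) * this
    simp only [hAdef, hD, e1]
    push_cast
    rw [← ht] at s1 c1
    rw [← hnφ]
    linear_combination hs + (n - j - 1 / 2) * φ * s1 - c1 + (1/2) * φ * t * c1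
  rw [sum_congr rfl hAD, alt_telescope]
  have hD0 : D 0 = π * tan (π / (2 * (m + 1))) := by
    simp [hD, hnφ]
    rw [ht, hφ, hnR]; congr 1; field_simp
  have hDn : D n = 0 := by
    simp only [hD, hnφ]
    rw [sum_eq_zero]
    · simp
    · intro k _
      have : sin (((k:ℝ) + 1) * π) = 0 := by exact_mod_cast sin_nat_mul_pi (k + 1)
      rw [this, mul_zero]
  rw [hD0, hDn]; ring

lemma norm2 (n : ℕ) (hn : 2 ≤ n) (b : ℕ → ℝ) (h : ∀ θ ∈ Set.Ioo 0 π,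
    0 ≤ -((π - θ) * sin θ - ∑ k ∈ range n, b k * cos (k * θ)) * cos (n * θ)) :
    ∫ θ in (0:ℝ)..π, |(π - θ) * sin θ - ∑ k ∈ range n, b k * cos (k * θ)|
      = π * (1 / cos (π / (2 * n)) - 1) := by
  have hn0 : (0:ℝ) < n := by exact_mod_cast (by omega : 0 < n)
  set E : ℝ → ℝ := fun θ => (π - θ) * sin θ - ∑ k ∈ range n, b k * cos (k * θ) with hEdef
  set φ : ℝ := π / n with hφ
  have hφ0 : 0 < φ := by have := pi_pos; positivity
  have hnφ : n * φ = π := by rw [hφ]; field_simp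
  set A : ℝ → ℝ := fun θ => -((π - θ) * cos θ) - sin θ -
    ∑ k ∈ range n, b k * (if k = 0 then θ else sin (k * θ) / k) with hAdef
  have hE : Continuous E := by fun_prop
  have hA : ∀ x, HasDerivAt A (E x) x := by
    intro x
    have h1 := ((((hasDerivAt_id x).const_sub π).mul (hasDerivAt_cos x)).neg).sub (hasDerivAt_sin x)
    have h2 : HasDerivAt (fun θ => ∑ k ∈ range n, b k * (if k = 0 then θ else sin (k * θ) / k))
        (∑ k ∈ range n, b k * cos (k * x)) x := by
      apply HasDerivAt.fun_sum
      intro k _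
      apply HasDerivAt.const_mul
      by_cases hk : k = 0
      · simp only [hk, if_true]
        exact (hasDerivAt_id' x).congr_deriv (by simp)
      · simp only [hk, if_false]
        have h3 := (((hasDerivAt_id x).const_mul (k:ℝ)).sin).div_const (k:ℝ)
        refine h3.congr_deriv ?_
        have : (k:ℝ) ≠ 0 := by exact_mod_cast hk
        simp only [id]
        field_simp
    refine (h1.sub h2).congr_deriv ?_
    simp only [hEdef, id]
    ring
  have hsum := sum_integral_adjacent_intervals (f := fun x => |E x|) (μ := MeasureTheory.volume)
    (a := fun j : ℕ => j * φ) (n := n) (fun k _ => (hE.abs).intervalIntegrable _ _)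
  simp only [Nat.cast_zero, zero_mul, hnφ] at hsum
  rw [← hsum]
  have hpiece : ∀ j ∈ range n, ∫ x in (j:ℝ) * φ..((j + 1 : ℕ):ℝ) * φ, |E x| =
      (-1) ^ j * (A (((j + 1 : ℕ):ℝ) * φ) + A (j * φ) - 2 * A (j * φ + φ / 2)) := by
    intro j hj
    have hjn : (j:ℝ) + 1 ≤ n := by exact_mod_cast mem_range.1 hj
    have hsgn : ∀ x, 0 < x → x < π → ∀ σ : ℝ, |σ| = 1 → 0 < σ * cos (n * x) → 0 ≤ -σ * E x := by
      intro x hx1 hx2 σ hσ hpos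
      have h1 := h x ⟨hx1, hx2⟩
      have hσ2 : σ * σ = 1 := by
        rw [← sq, ← sq_abs, hσ]; norm_num
      have h3 : 0 ≤ (-σ * E x) * (σ * cos (n * x)) := by
        have : (-σ * E x) * (σ * cos (n * x)) = (σ * σ) * (-E x * cos (n * x)) := by ring
        rw [this, hσ2, one_mul]; exact h1
      exact nonneg_of_mul_nonneg_left h3 hpos
    have i1 : ∫ x in (j:ℝ) * φ..(j * φ + φ / 2), |E x| = -(-1) ^ j * (A (j * φ + φ / 2) - A (j * φ)) := by
      apply abs_integral E A hE hA
      · linarith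
      · simp
      · intro x hx
        apply hsgn x (lt_of_le_of_lt (by positivity) hx.1) (by rw [← hnφ]; nlinarith [hx.2])
        · simp
        · rw [← cos_sub_nat_mul_pi]
          apply cos_pos_of_mem_Ioo
          constructor
          · rw [← hnφ]; nlinarith [hx.1]
          · rw [← hnφ]; nlinarith [hx.2]
    have i2 : ∫ x in (j * φ + φ / 2)..((j + 1 : ℕ):ℝ) * φ, |E x| =
        -(-1) ^ (j + 1) * (A (((j + 1 : ℕ):ℝ) * φ) - A (j * φ + φ / 2)) := by
      apply abs_integral E A hE hA
      · push_cast; linarith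
      · simp
      · intro x hx
        push_cast at hx
        apply hsgn x (lt_of_le_of_lt (by positivity) hx.1) (by rw [← hnφ]; nlinarith [hx.2])
        · simp
        · rw [← cos_sub_nat_mul_pi]
          apply cos_pos_of_mem_Ioo
          push_cast
          constructor
          · rw [← hnφ]; nlinarith [hx.1]
          · rw [← hnφ]; nlinarith [hx.2]
    rw [← integral_add_adjacent_intervals (b := (j:ℝ) * φ + φ / 2) (hE.abs.intervalIntegrable _ _) (hE.abs.intervalIntegrable _ _), i1, i2]
    ring
  rw [sum_congr rfl hpiece]
  set t := tan (φ / 2) with ht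
  set s := 1 / cos (φ / 2) with hs
  have hc1 : cos (φ / 2) ≠ 0 := by
    have := cos_half_ne n 1 (by omega)
    simpa using this
  set D : ℕ → ℝ := fun j => (s - 1) * (n - j) * φ * cos (j * φ) - s * t * φ / 2 * sin (j * φ)
    - (1 - s) * sin (j * φ) - ∑ k ∈ range n, b k * (1 - 1 / cos (k * φ / 2)) / k * sin (k * (j * φ)) with hD
  have hAD : ∀ j ∈ range n, (-1:ℝ) ^ j * (A (((j + 1 : ℕ):ℝ) * φ) + A (j * φ) - 2 * A (j * φ + φ / 2)) = (-1) ^ j * (D j + D (j + 1)) := by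
    intro j _
    congr 1
    have e1 : ((j + 1 : ℕ):ℝ) * φ = j * φ + φ := by push_cast; ring
    have c1 := cos_diff (j * φ) φ hc1
    have s2 : 2 * sin (j * φ + φ / 2) = s * (sin (j * φ) + sin (j * φ + φ)) := by
      rw [sin_mid, hs]; field_simp
    have c2 : 2 * cos (j * φ + φ / 2) = s * (cos (j * φ) + cos (j * φ + φ)) := by
      rw [cos_mid, hs]; field_simp
    have hs : ∑ k ∈ range n, b k * (if k = 0 then (j * φ + φ) else sin (k * (j * φ + φ)) / k)
        + ∑ k ∈ range n, b k * (if k = 0 then (j * φ) else sin (k * (j * φ)) / k)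
        - 2 * ∑ k ∈ range n, b k * (if k = 0 then (j * φ + φ / 2) else sin (k * (j * φ + φ / 2)) / k)
      = ∑ k ∈ range n, b k * (1 - 1 / cos (k * φ / 2)) / k * sin (k * (j * φ))
        + ∑ k ∈ range n, b k * (1 - 1 / cos (k * φ / 2)) / k * sin (k * (j * φ + φ)) := by
      rw [mul_sum, ← sum_add_distrib, ← sum_add_distrib, ← sum_sub_distrib]
      apply sum_congr rfl
      intro k hk
      have hk' := mem_range.1 hk
      by_cases hk0 : k = 0
      · simp [hk0]; ring
      have hkR : (k:ℝ) ≠ 0 := by exact_mod_cast hk0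
      simp only [hk0, if_false]
      have c2 := cos_half_ne n k hk'
      rw [← hφ] at c2
      have := sin_mid (k * (j * φ)) (k * φ)
      rw [show (k:ℝ) * (j * φ + φ) = k * (j * φ) + k * φ by ring,
        show (k:ℝ) * (j * φ + φ / 2) = k * (j * φ) + k * φ / 2 by ring]
      have h5 : sin (k * (j * φ) + k * φ / 2) = (sin (k * (j * φ)) + sin (k * (j * φ) + k * φ)) / (2 * cos (k * φ / 2)) := by
        rw [this]; field_simp
      rw [h5]
      field_simp
      ring
    simp only [hAdef, hD, e1]
    push_cast
    rw [← ht] at c1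
    rw [← hnφ]
    linear_combination -hs + (n - j - 1 / 2) * φ * c2 + s2 + (1/2) * φ * s * c1
  rw [sum_congr rfl hAD, alt_telescope]
  have hD0 : D 0 = π * (1 / cos (π / (2 * n)) - 1) := by
    have : π / (2 * n) = φ / 2 := by rw [hφ]; field_simp
    rw [this]
    simp only [hD, Nat.cast_zero, zero_mul, sin_zero, cos_zero, mul_zero, sum_const_zero, ← hs]
    rw [← hnφ]; ring
  have hDn : D n = 0 := by
    simp only [hD, hnφ]
    rw [sum_eq_zero]
    · simp
    · intro k _
      rw [sin_nat_mul_pi, mul_zero]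
  rw [hD0, hDn]; ring

lemma h_int {h : ℝ → ℝ} (hm : Measurable h) (hb : ∀ t, |h t| ≤ 1) (c : ℝ → ℝ) (hc : Continuous c) (a b : ℝ) :
    IntervalIntegrable (fun s => h s * c s) MeasureTheory.volume a b := by
  refine (hc.intervalIntegrable a b).mono_fun (hm.mul hc.measurable).aestronglyMeasurable ?_
  apply Filter.Eventually.of_forall
  intro s
  simp only [norm_mul, norm_eq_abs]
  exact mul_le_of_le_one_left (abs_nonneg _) (hb s)

lemma conv_shift {h : ℝ → ℝ} (hper : ∀ t, h (t + 2 * π) = h t) (c : ℝ → ℝ)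
    (hcper : ∀ t, c (t + 2 * π) = c t) (θ : ℝ) :
    ∫ s in (0:ℝ)..(2 * π), h (θ - s) * c s = ∫ u in (-π)..π, h u * c (θ - u) := by
  have e := integral_comp_sub_left (a := 0) (b := 2 * π) (fun u => h u * c (θ - u)) θ
  simp only [sub_sub_cancel] at e
  rw [e]
  have hp : Function.Periodic (fun u => h u * c (θ - u)) (2 * π) := by
    intro u
    simp only
    rw [hper, ← hcper (θ - (u + 2 * π))]
    congr 2; ring
  have := hp.intervalIntegral_add_eq (θ - 2 * π) (-π)
  rw [show θ - 2 * π + 2 * π = θ - 0 by ring, show -π + 2 * π = π by ring] at this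
  exact this

lemma h_sin_zero {h : ℝ → ℝ} (heven : ∀ t, h (-t) = h t) (l : ℕ) :
    ∫ u in (-π)..π, h u * sin (l * u) = 0 := by
  have e := integral_comp_neg (a := -π) (b := π) (fun u => h u * sin (l * u))
  simp only [heven, mul_neg, sin_neg, integral_neg, neg_neg] at e
  linarith

lemma conv_cos {h : ℝ → ℝ} (hm : Measurable h) (hb : ∀ t, |h t| ≤ 1) (hper : ∀ t, h (t + 2 * π) = h t)
    (heven : ∀ t, h (-t) = h t) (l : ℕ) (θ : ℝ) :
    ∫ s in (0:ℝ)..(2 * π), h (θ - s) * cos (l * s) = cos (l * θ) * ∫ u in (-π)..π, h u * cos (l * u) := by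
  rw [conv_shift hper (fun s => cos (l * s)) (fun t => by
    rw [mul_add]; exact cos_add_nat_mul_two_pi _ l)]
  have : ∀ u, h u * cos (l * (θ - u)) = cos (l * θ) * (h u * cos (l * u)) + sin (l * θ) * (h u * sin (l * u)) := by
    intro u; rw [mul_sub, cos_sub]; ring
  simp only [this]
  rw [integral_add, integral_const_mul, integral_const_mul, h_sin_zero heven]
  · ring
  · exact (h_int hm hb _ (by fun_prop) _ _).const_mul _
  · exact (h_int hm hb _ (by fun_prop) _ _).const_mul _

lemma conv_sin {h : ℝ → ℝ} (hm : Measurable h) (hb : ∀ t, |h t| ≤ 1) (hper : ∀ t, h (t + 2 * π) = h t)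
    (heven : ∀ t, h (-t) = h t) (l : ℕ) (θ : ℝ) :
    ∫ s in (0:ℝ)..(2 * π), h (θ - s) * sin (l * s) = sin (l * θ) * ∫ u in (-π)..π, h u * cos (l * u) := by
  rw [conv_shift hper (fun s => sin (l * s)) (fun t => by
    rw [mul_add]; exact sin_add_nat_mul_two_pi _ l)]
  have : ∀ u, h u * sin (l * (θ - u)) = sin (l * θ) * (h u * cos (l * u)) - cos (l * θ) * (h u * sin (l * u)) := by
    intro u; rw [mul_sub, sin_sub]; ring
  simp only [this]
  rw [integral_sub, integral_const_mul, integral_const_mul, h_sin_zero heven]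
  · ring
  · exact (h_int hm hb _ (by fun_prop) _ _).const_mul _
  · exact (h_int hm hb _ (by fun_prop) _ _).const_mul _

lemma double_int (E : ℝ → ℝ) (hE : Continuous E) (hs : ∀ s, |E (2 * π - s)| = |E s|) :
    ∫ s in (0:ℝ)..(2 * π), |E s| = 2 * ∫ s in (0:ℝ)..π, |E s| := by
  have e := integral_comp_sub_left (a := 0) (b := π) (fun u => |E u|) (2 * π)
  simp only [hs] at e
  rw [← integral_add_adjacent_intervals (b := π) (hE.abs.intervalIntegrable _ _) (hE.abs.intervalIntegrable _ _)]
  rw [show 2 * π - π = π by ring, sub_zero] at e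
  rw [← e]; ring

lemma deriv_bound (g : ℝ → ℝ) (hg : ∀ s t, |g s - g t| ≤ |cos s - cos t|) (t : ℝ) :
    |deriv g t| ≤ |sin t| := by
  by_cases hd : DifferentiableAt ℝ g t
  · have h1 := hasDerivAt_iff_tendsto_slope.1 hd.hasDerivAt
    have h2 := hasDerivAt_iff_tendsto_slope.1 (hasDerivAt_cos t)
    have := le_of_tendsto_of_tendsto' h1.abs h2.abs (fun s => by
      simp only [slope_def_field, abs_div]
      exact div_le_div_of_nonneg_right (hg s t) (abs_nonneg _))
    simpa using this
  · rw [deriv_zero_of_not_differentiableAt hd]; simp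

lemma repr_formula (g : ℝ → ℝ) (hg : ∀ s t, |g s - g t| ≤ |cos s - cos t|) (θ : ℝ) :
    ∫ s in (0:ℝ)..(2 * π), (π - s) * deriv g (θ - s) = 2 * π * g θ - ∫ u in (0:ℝ)..(2 * π), g u := by
  have hper : Function.Periodic g (2 * π) := by
    intro t
    have := hg (t + 2 * π) t
    rw [cos_add_two_pi, sub_self, abs_zero] at this
    exact sub_eq_zero.1 (abs_nonpos_iff.1 this)
  have hlip : LipschitzWith 1 g := by
    apply LipschitzWith.of_dist_le_mul
    intro s t
    rw [dist_eq, dist_eq]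
    simpa using (hg s t).trans (abs_cos_sub_cos_le s t)
  have e := integral_comp_sub_left (a := 0) (b := 2 * π) (fun u => (π - θ + u) * deriv g u) θ
  have e' : ∀ s, (π - θ + (θ - s)) * deriv g (θ - s) = (π - s) * deriv g (θ - s) := by
    intro s; ring
  simp only [e'] at e
  rw [e]
  have hF : LipschitzWith 1 (fun u : ℝ => π - θ + u) := by
    apply LipschitzWith.of_dist_le_mul
    intro s t
    simp [dist_eq]
  rw [AbsolutelyContinuousOnInterval.integral_mul_deriv_eq_deriv_mul
    (hF.lipschitzOnWith.absolutelyContinuousOnInterval) (hlip.lipschitzOnWith.absolutelyContinuousOnInterval)]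
  have hd : ∀ u : ℝ, deriv (fun u : ℝ => π - θ + u) u = 1 := by
    intro u; simp
  simp only [hd, one_mul]
  have := hper.intervalIntegral_add_eq (θ - 2 * π) 0
  rw [show θ - 2 * π + 2 * π = θ - 0 by ring, zero_add] at this
  rw [this]
  have h3 : g (θ - 2 * π) = g θ := hper.sub_eq θ
  rw [h3, sub_zero]; ring

lemma conv_sum1 {h : ℝ → ℝ} (hm : Measurable h) (hb : ∀ t, |h t| ≤ 1) (hper : ∀ t, h (t + 2 * π) = h t)
    (heven : ∀ t, h (-t) = h t) (m : ℕ) (b : ℕ → ℝ) (θ : ℝ) :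
    ∫ s in (0:ℝ)..(2 * π), h (θ - s) * ∑ k ∈ range m, b k * sin ((k + 1) * s)
      = ∑ k ∈ range m, b k * (sin ((k + 1) * θ) * ∫ u in (-π)..π, h u * cos (((k + 1 : ℕ) : ℝ) * u)) := by
  have hm' : Measurable (fun s => h (θ - s)) := hm.comp (by fun_prop)
  have e : ∀ s, h (θ - s) * ∑ k ∈ range m, b k * sin ((k + 1) * s)
      = ∑ k ∈ range m, b k * (h (θ - s) * sin (((k + 1 : ℕ) : ℝ) * s)) := by
    intro s
    rw [mul_sum]
    refine sum_congr rfl fun k _ => ?_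
    push_cast; ring
  simp only [e]
  rw [integral_finsetSum]
  · refine sum_congr rfl fun k _ => ?_
    rw [integral_const_mul, conv_sin hm hb hper heven]
    push_cast; rfl
  · intro k _
    exact (h_int hm' (fun t => hb _) _ (by fun_prop) _ _).const_mul _

lemma conv_sum2 {h : ℝ → ℝ} (hm : Measurable h) (hb : ∀ t, |h t| ≤ 1) (hper : ∀ t, h (t + 2 * π) = h t)
    (heven : ∀ t, h (-t) = h t) (n : ℕ) (b : ℕ → ℝ) (θ : ℝ) :
    ∫ s in (0:ℝ)..(2 * π), h (θ - s) * ∑ k ∈ range n, b k * cos (k * s)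
      = ∑ k ∈ range n, b k * (cos (k * θ) * ∫ u in (-π)..π, h u * cos (k * u)) := by
  have hm' : Measurable (fun s => h (θ - s)) := hm.comp (by fun_prop)
  have e : ∀ s, h (θ - s) * ∑ k ∈ range n, b k * cos (k * s)
      = ∑ k ∈ range n, b k * (h (θ - s) * cos (k * s)) := by
    intro s
    rw [mul_sum]
    refine sum_congr rfl fun k _ => ?_
    ring
  simp only [e]
  rw [integral_finsetSum]
  · refine sum_congr rfl fun k _ => ?_
    rw [integral_const_mul, conv_cos hm hb hper heven]
  · intro k _
    exact (h_int hm' (fun t => hb _) _ (by fun_prop) _ _).const_mul _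

lemma int_bound {h : ℝ → ℝ} (hb : ∀ t, |h t| ≤ 1) (E : ℝ → ℝ) (hE : Continuous E) (θ : ℝ) :
    |∫ s in (0:ℝ)..(2 * π), h (θ - s) * E s| ≤ ∫ s in (0:ℝ)..(2 * π), |E s| := by
  have := norm_integral_le_of_norm_le (μ := MeasureTheory.volume) (a := 0) (b := 2 * π)
    (f := fun s => h (θ - s) * E s) (g := fun s => |E s|)
    two_pi_pos.le (Filter.Eventually.of_forall fun s _ => by
      rw [norm_eq_abs, abs_mul]
      exact mul_le_of_le_one_left (abs_nonneg _) (hb _)) (hE.abs.intervalIntegrable _ _)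
  simpa using this

lemma core {h : ℝ → ℝ} (hm : Measurable h) (hb : ∀ t, |h t| ≤ 1) (hper : ∀ t, h (t + 2 * π) = h t)
    (heven : ∀ t, h (-t) = h t) (g : ℝ → ℝ) (I : ℝ)
    (hrep : ∀ θ, 2 * π * g θ - I = ∫ s in (0:ℝ)..(2 * π),
      (-sin θ * (h (θ - s) * ((π - s) * cos s)) + cos θ * (h (θ - s) * ((π - s) * sin s))))
    (m : ℕ) (hm1 : 1 ≤ m) :
    ∃ P : Polynomial ℝ, P.natDegree ≤ m + 1 ∧ ∀ θ : ℝ,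
      |g θ - P.eval (cos θ)| ≤ tan (π / (2 * (m + 1))) * |sin θ|
        + (1 / cos (π / (2 * (m + 1))) - 1) * |cos θ| := by
  obtain ⟨b, hbT⟩ := exists_T1 m hm1
  obtain ⟨a, haT⟩ := exists_T2 (m + 1) (by omega)
  have N1 := norm1 m hm1 b hbT
  have N2 := norm2 (m + 1) (by omega) a haT
  push_cast at N2
  set c : ℕ → ℝ := fun l => ∫ u in (-π)..π, h u * cos (l * u) with hc
  refine ⟨C (1 / (2 * π)) * (C I - ∑ k ∈ range m, C (b k * c (k + 1)) * ((1 - X ^ 2) * Chebyshev.U ℝ k)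
    + ∑ k ∈ range (m + 1), C (a k * c k) * (X * Chebyshev.T ℝ k)), ?_, ?_⟩
  · refine (natDegree_C_mul_le _ _).trans ?_
    refine natDegree_add_le_of_degree_le (natDegree_sub_le_of_le ((natDegree_C I).trans_le (Nat.zero_le _)) ?_ |>.trans (max_self _).le) ?_
    · refine natDegree_sum_le_of_forall_le _ _ fun k hk => (natDegree_C_mul_le _ _).trans ?_
      have hk' := mem_range.1 hk
      have h2 : (1 - X ^ 2 : ℝ[X]).natDegree ≤ 2 := by compute_degree
      have h3 : (Chebyshev.U ℝ (k : ℤ)).natDegree ≤ k := by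
        rw [Chebyshev.natDegree_U]; omega
      exact natDegree_mul_le.trans (by omega)
    · refine natDegree_sum_le_of_forall_le _ _ fun k hk => (natDegree_C_mul_le _ _).trans ?_
      have hk' := mem_range.1 hk
      have h3 : (Chebyshev.T ℝ (k : ℤ)).natDegree ≤ k := by
        rw [Chebyshev.natDegree_T]; omega
      exact natDegree_mul_le.trans (by rw [natDegree_X]; omega)
  · intro θ
    have hm' : Measurable (fun s => h (θ - s)) := hm.comp (by fun_prop)
    have S1 := conv_sum1 hm hb hper heven m b θ
    have S2 := conv_sum2 hm hb hper heven (m + 1) a θ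
    have ii : ∀ q : ℝ → ℝ, Continuous q →
        IntervalIntegrable (fun s => h (θ - s) * q s) MeasureTheory.volume 0 (2 * π) :=
      fun q hq => h_int hm' (fun t => hb _) q hq _ _
    have R := hrep θ
    rw [integral_add ((ii _ (by fun_prop)).const_mul _) ((ii _ (by fun_prop)).const_mul _),
      integral_const_mul, integral_const_mul] at R
    have D1 : ∫ s in (0:ℝ)..(2 * π), h (θ - s) * ((π - s) * cos s - ∑ k ∈ range m, b k * sin ((k + 1) * s))
        = (∫ s in (0:ℝ)..(2 * π), h (θ - s) * ((π - s) * cos s))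
          - ∑ k ∈ range m, b k * (sin ((k + 1) * θ) * c (k + 1)) := by
      simp only [mul_sub (h _)]
      rw [integral_sub (ii _ (by fun_prop)) (ii _ (by fun_prop)), S1]
    have D2 : ∫ s in (0:ℝ)..(2 * π), h (θ - s) * ((π - s) * sin s - ∑ k ∈ range (m + 1), a k * cos (k * s))
        = (∫ s in (0:ℝ)..(2 * π), h (θ - s) * ((π - s) * sin s))
          - ∑ k ∈ range (m + 1), a k * (cos (k * θ) * c k) := by
      simp only [mul_sub (h _)]
      rw [integral_sub (ii _ (by fun_prop)) (ii _ (by fun_prop)), S2]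
    have B1 := int_bound hb (fun s => (π - s) * cos s - ∑ k ∈ range m, b k * sin ((k + 1) * s)) (by fun_prop) θ
    have B2 := int_bound hb (fun s => (π - s) * sin s - ∑ k ∈ range (m + 1), a k * cos (k * s)) (by fun_prop) θ
    rw [double_int _ (by fun_prop) (fun s => by
      rw [← abs_neg]
      congr 1
      have : ∀ k : ℕ, sin ((k + 1) * (2 * π - s)) = - sin ((k + 1) * s) := by
        intro k
        have := sin_nat_mul_two_pi_sub ((k + 1) * s) (k + 1)
        push_cast at this
        rw [← this]; congr 1; ring
      simp only [this, cos_two_pi_sub, mul_neg, sum_neg_distrib]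
      ring), N1, D1] at B1
    rw [double_int _ (by fun_prop) (fun s => by
      congr 1
      have : ∀ k : ℕ, cos (k * (2 * π - s)) = cos (k * s) := by
        intro k
        have := cos_nat_mul_two_pi_sub (k * s) k
        rw [← this]; congr 1; ring
      simp only [this, sin_two_pi_sub]
      ring), N2, D2] at B2
    have Q1 : ∑ k ∈ range m, b k * c (k + 1) * ((1 - cos θ ^ 2) * (Chebyshev.U ℝ (k : ℤ)).eval (cos θ))
        = sin θ * ∑ k ∈ range m, b k * (sin ((k + 1) * θ) * c (k + 1)) := by
      rw [mul_sum]
      refine sum_congr rfl fun k _ => ?_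
      have := Chebyshev.U_real_cos θ k
      push_cast at this
      rw [← this, ← sin_sq]; ring
    have Q2 : ∑ k ∈ range (m + 1), a k * c k * (cos θ * (Chebyshev.T ℝ (k : ℤ)).eval (cos θ))
        = cos θ * ∑ k ∈ range (m + 1), a k * (cos (k * θ) * c k) := by
      rw [mul_sum]
      refine sum_congr rfl fun k _ => ?_
      have := Chebyshev.T_real_cos θ k
      push_cast at this
      rw [← this]; ring
    simp only [eval_mul, eval_add, eval_sub, eval_C, eval_finsetSum, eval_X, eval_pow, eval_one]
    rw [Q1, Q2]
    generalize (∫ s in (0:ℝ)..(2 * π), h (θ - s) * ((π - s) * cos s)) = J1 at *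
    generalize (∫ s in (0:ℝ)..(2 * π), h (θ - s) * ((π - s) * sin s)) = J2 at *
    generalize ∑ k ∈ range m, b k * (sin ((k + 1) * θ) * c (k + 1)) = K1 at *
    generalize ∑ k ∈ range (m + 1), a k * (cos (k * θ) * c k) = K2 at *
    have hpi := pi_pos
    have e : g θ - 1 / (2 * π) * (I - sin θ * K1 + cos θ * K2)
        = 1 / (2 * π) * (-sin θ * (J1 - K1) + cos θ * (J2 - K2)) := by
      field_simp
      linarith
    rw [e, abs_mul, abs_of_pos (by positivity : 0 < 1 / (2 * π)), one_div, inv_mul_le_iff₀ (by positivity)]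
    refine (abs_add_le _ _).trans ?_
    rw [abs_mul, abs_mul, abs_neg]
    have := mul_le_mul_of_nonneg_left B1 (abs_nonneg (sin θ))
    have := mul_le_mul_of_nonneg_left B2 (abs_nonneg (cos θ))
    linarith

theorem nikolsky_pointwise_estimate (f : ℝ → ℝ)
    (hf : LipschitzOnWith 1 f (Set.Icc (-1) 1)) (n : ℕ) (hn : 2 ≤ n) :
    ∃ P : Polynomial ℝ, P.natDegree ≤ n ∧
      ∀ x ∈ Set.Icc (-1 : ℝ) 1,
        |f x - P.eval x| ≤
          Real.tan (Real.pi / (2 * n)) * Real.sqrt (1 - x ^ 2) +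
            (1 / Real.cos (Real.pi / (2 * n)) - 1) * |x| := by
  obtain ⟨m, rfl⟩ : ∃ m, n = m + 1 := ⟨n - 1, by omega⟩
  set g : ℝ → ℝ := fun θ => f (cos θ) with hgd
  have hg : ∀ s t, |g s - g t| ≤ |cos s - cos t| := by
    intro s t
    have := hf.dist_le_mul (cos s) (cos_mem_Icc s) (cos t) (cos_mem_Icc t)
    simpa [dist_eq] using this
  have hdb := deriv_bound g hg
  set h : ℝ → ℝ := fun t => -deriv g t / sin t with hh
  have hd : ∀ t, deriv g t = -(h t * sin t) := by
    intro t
    by_cases hs : sin t = 0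
    · have := hdb t
      rw [hs, abs_zero] at this
      rw [abs_nonpos_iff.1 this, hs]; simp
    · simp only [hh]; field_simp
  have hdper : ∀ t, deriv g (t + 2 * π) = deriv g t := by
    intro t
    rw [← deriv_comp_add_const]
    congr 1
    funext s
    simp [hgd]
  have hdodd : ∀ t, deriv g (-t) = -deriv g t := by
    intro t
    have := deriv_comp_neg g t
    have e : (fun x => g (-x)) = g := by funext s; simp [hgd]
    rw [e] at this
    rw [this, neg_neg]
  obtain ⟨P, hP, hPe⟩ := core (h := h) ((measurable_deriv g).neg.div measurable_sin)
    (fun t => by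
      simp only [hh, abs_div, abs_neg]
      exact div_le_one_of_le₀ (hdb t) (abs_nonneg _))
    (fun t => by simp only [hh, hdper, sin_add_two_pi])
    (fun t => by simp only [hh, hdodd, sin_neg, neg_neg, div_neg, neg_div])
    g (∫ u in (0:ℝ)..(2 * π), g u)
    (fun θ => by
      rw [← repr_formula g hg θ]
      refine integral_congr fun s _ => ?_
      simp only [hd, sin_sub]
      ring) m (by omega)
  refine ⟨P, hP, fun x hx => ?_⟩
  have := hPe (arccos x)
  simp only [hgd] at this
  rw [cos_arccos hx.1 hx.2, sin_arccos, abs_of_nonneg (sqrt_nonneg _)] at this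
  push_cast
  exact this
end
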